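/- arXiv:1903.04351 — 4 statements merged into one kernel-verified Lean document; each statement's English description precedes it below -/
import Mathlib

section
/- There is a universal constant K > 0 such that the following holds. Let k ∈ ℤ₊, ε ∈ (0,1), let X ⊂ ℝ^d be a finite set of n points, and let p ∈ {1,…,n}. Let L be a finite collection of lines in ℝ^d, let X be partitioned as X = ⋃_{l∈L} X_l with X_l ⊆ l, and for each l ∈ L let X_l be partitioned into a finite family 𝒴_l of nonempty 'sub-intervals' (subsets Y ⊆ X_l that are contiguous along l, i.e., Y = I(Y) ∩ X_l where I(Y) is the smallest closed segment of l containing Y). Suppose there are reals s > 0 and t_l > 0 (for l ∈ L) such that each Y ∈ 𝒴_l satisfies either length(I(Y)) ≤ (ε/p)·s or δ(Y) ≤ (ε/k)·t_l, where δ(Y) := ∑_{y∈Y} ‖y − μ(Y)‖ and μ(Y) is the mean of Y. Let D be the multiset consisting of, for each l ∈ L and each Y ∈ 𝒴_l, the point μ(Y) with multiplicity |Y|. Then for every set C ⊂ ℝ^d of k centers: |cost_p(D,C) − cost_p(X,C)| ≤ K·ε·(s + ∑_{l∈L} t_l). -/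
/-- `topP p s` is the sum of the `p` largest entries of the multiset `s` of reals. -/
noncomputable def topP (p : ℕ) (s : Multiset ℝ) : ℝ :=
  (((s.sort (· ≤ ·)).reverse).take p).sum

/-- The p-Centrum objective: the sum of the `p` largest distances from the points
of the multiset `s` (with multiplicity) to the nearest center in `C`. -/
noncomputable def costP (d : ℕ) (p : ℕ) (s : Multiset (EuclideanSpace ℝ (Fin d)))
    (C : Finset (EuclideanSpace ℝ (Fin d))) : ℝ :=
  topP p (s.map fun x => Metric.infDist x (C : Set (EuclideanSpace ℝ (Fin d))))

/-- The mean point of a finite set of points in `ℝ^d`. -/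
noncomputable def meanP (d : ℕ) (Y : Finset (EuclideanSpace ℝ (Fin d))) :
    EuclideanSpace ℝ (Fin d) :=
  ((Y.card : ℝ)⁻¹) • ∑ y ∈ Y, y

/-- The cumulative error of a finite set of points in `ℝ^d`. -/
noncomputable def deltaP (d : ℕ) (Y : Finset (EuclideanSpace ℝ (Fin d))) : ℝ :=
  ∑ y ∈ Y, ‖y - meanP d Y‖

section helpers

theorem h_topP_le (p : ℕ) (s : Multiset ℝ) (hp : p ≤ s.card) (τ : ℝ) :
    topP p s ≤ p * τ + (s.map fun v => max (v - τ) 0).sum := by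
  unfold topP
  set l := (s.sort (· ≤ ·)).reverse with hl
  have hs : s = (l : Multiset ℝ) := by
    rw [hl, Multiset.coe_reverse, Multiset.sort_eq]
  have hlen : p ≤ l.length := by rw [hs] at hp; simpa using hp
  have h1 : ∀ l : List ℝ, l.sum ≤ l.length * τ + (l.map fun v => max (v - τ) 0).sum := by
    intro l
    induction l with
    | nil => simp
    | cons a l ih =>
      simp only [List.sum_cons, List.length_cons, List.map_cons]
      push_cast
      have := le_max_left (a - τ) 0
      linarith
  have h2 : (s.map fun v => max (v - τ) 0).sum
      = ((l.take p).map fun v => max (v - τ) 0).sum + ((l.drop p).map fun v => max (v - τ) 0).sum := by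
    rw [hs, Multiset.map_coe, Multiset.sum_coe, ← List.sum_append, ← List.map_append,
      List.take_append_drop]
  have h3 : 0 ≤ ((l.drop p).map fun v => max (v - τ) 0).sum := by
    apply List.sum_nonneg
    intro x hx
    simp only [List.mem_map] at hx
    obtain ⟨v, -, rfl⟩ := hx
    exact le_max_right _ _
  have h4 := h1 (l.take p)
  rw [List.length_take, min_eq_left hlen] at h4
  linarith

theorem h_topP_eq (p : ℕ) (hp1 : 1 ≤ p) (s : Multiset ℝ) (hp : p ≤ s.card) :
    ∃ τ : ℝ, p * τ + (s.map fun v => max (v - τ) 0).sum = topP p s := by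
  unfold topP
  set l := (s.sort (· ≤ ·)).reverse with hl
  have hs : s = (l : Multiset ℝ) := by
    rw [hl, Multiset.coe_reverse, Multiset.sort_eq]
  have hlen : p ≤ l.length := by rw [hs] at hp; simpa using hp
  have hsort : l.Pairwise (· ≥ ·) := by
    rw [hl, List.pairwise_reverse]
    exact Multiset.pairwise_sort s _
  have hq : p - 1 < l.length := by omega
  refine ⟨l[p-1], ?_⟩
  set τ := l[p-1] with hτ
  have hge : ∀ x ∈ l.take p, τ ≤ x := by
    intro x hx
    obtain ⟨i, hi, rfl⟩ := List.mem_take_iff_getElem.1 hx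
    rcases Nat.lt_or_ge i (p-1) with h | h
    · exact List.pairwise_iff_getElem.1 hsort i (p-1) (by omega) hq h
    · have : i = p - 1 := by omega
      subst this; exact le_rfl
  have hle : ∀ x ∈ l.drop p, x ≤ τ := by
    intro x hx
    obtain ⟨i, hi, rfl⟩ := List.mem_drop_iff_getElem.1 hx
    exact List.pairwise_iff_getElem.1 hsort (p-1) _ hq (by omega) (by omega)
  have h1 : ∀ l : List ℝ, (∀ x ∈ l, τ ≤ x) →
      l.length * τ + (l.map fun v => max (v - τ) 0).sum = l.sum := by
    intro l
    induction l with
    | nil => simp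
    | cons a l ih =>
      intro h
      simp only [List.sum_cons, List.length_cons, List.map_cons]
      push_cast
      have h5 := h a (by simp)
      rw [max_eq_left (by linarith)]
      have := ih (fun x hx => h x (by simp [hx]))
      linarith
  have h0 : ∀ l : List ℝ, (∀ x ∈ l, x ≤ τ) → (l.map fun v => max (v - τ) 0).sum = 0 := by
    intro l
    induction l with
    | nil => simp
    | cons a l ih =>
      intro h
      simp only [List.sum_cons, List.map_cons]
      have h5 := h a (by simp)
      rw [max_eq_right (by linarith), ih (fun x hx => h x (by simp [hx]))]
      simp
  have h2 : (s.map fun v => max (v - τ) 0).sum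
      = ((l.take p).map fun v => max (v - τ) 0).sum + ((l.drop p).map fun v => max (v - τ) 0).sum := by
    rw [hs, Multiset.map_coe, Multiset.sum_coe, ← List.sum_append, ← List.map_append,
      List.take_append_drop]
  have h4 := h1 (l.take p) hge
  rw [List.length_take, min_eq_left hlen] at h4
  rw [h2, h0 _ hle]
  linarith

theorem h_sum_intervals {ι : Type*} (S : Finset ι) (a b : ι → ℝ) (Φ : ℝ → ℝ) (hΦ : Monotone Φ)
    (A : ℝ) (hA : ∀ x, A ≤ Φ x) (hab : ∀ i ∈ S, a i ≤ b i)
    (hd : ∀ i ∈ S, ∀ j ∈ S, i ≠ j → b i < a j ∨ b j < a i) :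
    ∀ B, A ≤ B → (∀ i ∈ S, Φ (b i) ≤ B) → ∑ i ∈ S, (Φ (b i) - Φ (a i)) ≤ B - A := by
  classical
  induction S using Finset.induction_on_max_value b with
  | empty => intro B hB _; simpa using hB
  | insert i S hi hmax ih =>
    intro B hB hle
    rw [Finset.sum_insert hi]
    have h1 := ih (fun j hj => hab j (by simp [hj]))
      (fun j hj j' hj' => hd j (by simp [hj]) j' (by simp [hj'])) (Φ (a i)) (hA _) (by
        intro j hj
        apply hΦ
        have hne : i ≠ j := by rintro rfl; exact hi hj
        rcases hd i (by simp) j (by simp [hj]) hne with h | h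
        · have := hab j (by simp [hj]); have := hmax j hj; linarith
        · exact h.le)
    have := hle i (by simp)
    linarith

theorem h_phi_mono (f : ℝ → ℝ) (r : ℝ → ℕ) (σ : ℝ → ℝ) (hr : Monotone r)
    (hσ : ∀ x, |σ x| ≤ 1) (hsub : ∀ u v, r u = r v → f u + σ u * (v - u) ≤ f v) :
    Monotone (fun x => 3 * (r x : ℝ) + σ x) := by
  intro u v huv
  show 3 * (r u : ℝ) + σ u ≤ 3 * (r v : ℝ) + σ v
  rcases (hr huv).lt_or_eq with h | h
  · have h1 : (r u : ℝ) + 1 ≤ r v := by exact_mod_cast h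
    have := abs_le.1 (hσ u); have := abs_le.1 (hσ v); linarith
  · have h1 := hsub u v h
    have h2 := hsub v u h.symm
    rw [h]
    rcases huv.lt_or_eq with h3 | h3
    · have : σ u ≤ σ v := by
        by_contra hc
        nlinarith
      linarith
    · rw [h3]

theorem h_interval_err {ι : Type*} (f : ℝ → ℝ) (r : ℝ → ℕ) (σ : ℝ → ℝ) (hr : Monotone r)
    (hf : ∀ u v, |f u - f v| ≤ |u - v|)
    (hσ : ∀ x, |σ x| ≤ 1) (hsub : ∀ u v, r u = r v → f u + σ u * (v - u) ≤ f v)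
    (Y : Finset ι) (u : ι → ℝ) (m a b : ℝ) (hm : ∑ i ∈ Y, (u i - m) = 0)
    (hu : ∀ i ∈ Y, a ≤ u i ∧ u i ≤ b) (ham : a ≤ m) (hmb : m ≤ b) :
    |∑ i ∈ Y, (f (u i) - f m)| ≤
      (∑ i ∈ Y, |u i - m|) * ((3 * (r b : ℝ) + σ b) - (3 * (r a : ℝ) + σ a)) := by
  have hδ : 0 ≤ ∑ i ∈ Y, |u i - m| := Finset.sum_nonneg fun i _ => abs_nonneg _
  rcases (hr (ham.trans hmb)).lt_or_eq with h | h
  · have h1 : (r a : ℝ) + 1 ≤ r b := by exact_mod_cast h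
    have := abs_le.1 (hσ a); have := abs_le.1 (hσ b)
    calc |∑ i ∈ Y, (f (u i) - f m)| ≤ ∑ i ∈ Y, |f (u i) - f m| := Finset.abs_sum_le_sum_abs _ _
      _ ≤ ∑ i ∈ Y, |u i - m| := Finset.sum_le_sum fun i _ => hf _ _
      _ = (∑ i ∈ Y, |u i - m|) * 1 := by ring
      _ ≤ _ := mul_le_mul_of_nonneg_left (by linarith) hδ
  · have hreq : ∀ x, a ≤ x → x ≤ b → r x = r a := fun x h1 h2 =>
      le_antisymm ((hr h2).trans h.ge) (hr h1)
    have hmono := h_phi_mono f r σ hr hσ hsub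
    have hσm : ∀ x y, a ≤ x → x ≤ y → y ≤ b → σ x ≤ σ y := by
      intro x y h1 h2 h3
      have := hmono h2
      simp only [hreq x h1 (h2.trans h3), hreq y (h1.trans h2) h3] at this
      linarith
    have hlow : 0 ≤ ∑ i ∈ Y, (f (u i) - f m) := by
      have : ∑ i ∈ Y, σ m * (u i - m) = 0 := by rw [← Finset.mul_sum, hm, mul_zero]
      rw [← this]
      apply Finset.sum_le_sum
      intro i hi
      have := hsub m (u i) (by rw [hreq m ham hmb, hreq _ (hu i hi).1 (hu i hi).2])
      linarith
    rw [abs_of_nonneg hlow]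
    have h0 : ∑ i ∈ Y, (f (u i) - f m) = ∑ i ∈ Y, (f (u i) - f m - σ m * (u i - m)) := by
      rw [Finset.sum_sub_distrib (f := fun i => f (u i) - f m), ← Finset.mul_sum, hm]; ring
    rw [h0, Finset.sum_mul]
    apply Finset.sum_le_sum
    intro i hi
    obtain ⟨h1, h2⟩ := hu i hi
    have h3 := hsub (u i) m (by rw [hreq m ham hmb, hreq _ h1 h2])
    have ha := hσm a m le_rfl ham hmb
    have hb := hσm m b ham hmb le_rfl
    have ha' := hσm a (u i) le_rfl h1 h2
    have hb' := hσm (u i) b h1 h2 le_rfl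
    rw [h]
    have h4 : f (u i) - f m - σ m * (u i - m) ≤ (σ (u i) - σ m) * (u i - m) := by nlinarith
    have h5 : (σ (u i) - σ m) * (u i - m) ≤ |σ (u i) - σ m| * |u i - m| := by
      rw [← abs_mul]; exact le_abs_self _
    have h6 : |σ (u i) - σ m| ≤ σ b - σ a := by rw [abs_le]; constructor <;> linarith
    have h7 := mul_le_mul_of_nonneg_right h6 (abs_nonneg (u i - m))
    nlinarith

/-- The rank / slope structure of the (truncated) distance function along a line. -/
theorem h_line {E : Type*} [NormedAddCommGroup E] [InnerProductSpace ℝ E] (C : Finset E)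
    (hC : C.Nonempty) (q e : E) (he : ‖e‖ = 1) (τ : ℝ) :
    ∃ (r : ℝ → ℕ) (σ : ℝ → ℝ), Monotone r ∧ (∀ x, r x + 1 ≤ C.card) ∧ (∀ x, |σ x| ≤ 1) ∧
      ∀ u v, r u = r v →
        max (Metric.infDist (q + u • e) (C : Set E) - τ) 0 + σ u * (v - u)
          ≤ max (Metric.infDist (q + v • e) (C : Set E) - τ) 0 := by
  classical
  have hmin : ∀ u : ℝ, ∃ c ∈ C, ∀ c' ∈ C, dist (q + u • e) c ≤ dist (q + u • e) c' :=
    fun u => Finset.exists_min_image C _ hC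
  choose c hcC hc using hmin
  have hinf : ∀ u, Metric.infDist (q + u • e) (C : Set E) = ‖q + u • e - c u‖ := by
    intro u
    apply le_antisymm
    · rw [← dist_eq_norm]; exact Metric.infDist_le_dist_of_mem (hcC u)
    · rw [← dist_eq_norm]
      exact (Metric.le_infDist (by simpa using hC)).2 fun y hy => hc u y hy
  let a : E → ℝ := fun c => inner ℝ (c - q) e
  let B : E → ℝ := fun c => ‖c - q‖ ^ 2
  have hsq : ∀ u c, ‖q + u • e - c‖ ^ 2 = u ^ 2 - 2 * u * a c + B c := by
    intro u c
    have : q + u • e - c = u • e - (c - q) := by abel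
    rw [this, norm_sub_sq_real, norm_smul, he, inner_smul_left, real_inner_comm]
    simp [a, B]; ring
  have hle : ∀ u, ∀ c' ∈ C, - 2 * u * a (c u) + B (c u) ≤ - 2 * u * a c' + B c' := by
    intro u c' hc'
    have h1 := hc u c' hc'
    rw [dist_eq_norm, dist_eq_norm] at h1
    have h2 := pow_le_pow_left₀ (norm_nonneg _) h1 2
    rw [hsq, hsq] at h2
    linarith
  have hamono : ∀ u v, u ≤ v → a (c u) ≤ a (c v) := by
    intro u v huv
    rcases huv.lt_or_eq with h | h
    · have h1 := hle u _ (hcC v)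
      have h2 := hle v _ (hcC u)
      by_contra hcon
      nlinarith
    · rw [h]
  let r : ℝ → ℕ := fun u => (C.filter fun c' => a c' < a (c u)).card
  have hreq : ∀ u v, u ≤ v → r u = r v → a (c u) = a (c v) := by
    intro u v huv h
    by_contra hne
    have hlt : a (c u) < a (c v) := lt_of_le_of_ne (hamono u v huv) hne
    have : r u < r v := by
      apply Finset.card_lt_card
      rw [Finset.ssubset_iff_of_subset]
      · exact ⟨c u, by simp [hcC, hlt], by simp⟩
      · intro x hx
        simp only [Finset.mem_filter] at hx ⊢
        exact ⟨hx.1, hx.2.trans hlt⟩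
    omega
  have hreq' : ∀ u v, r u = r v → a (c u) = a (c v) := by
    intro u v h
    rcases le_total u v with h1 | h1
    · exact hreq u v h1 h
    · exact (hreq v u h1 h.symm).symm
  let w : ℝ → E := fun u => ‖q + u • e - c u‖⁻¹ • (q + u • e - c u)
  have hw : ∀ u, ‖w u‖ ≤ 1 := by
    intro u
    simp only [w, norm_smul, norm_inv, norm_norm]
    exact inv_mul_le_one
  let σ : ℝ → ℝ := fun u => if ‖q + u • e - c u‖ ≤ τ then 0 else inner ℝ e (w u)
  refine ⟨r, σ, ?_, ?_, ?_, ?_⟩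
  · intro u v huv
    apply Finset.card_le_card
    intro x hx
    simp only [Finset.mem_filter] at hx ⊢
    exact ⟨hx.1, hx.2.trans_le (hamono u v huv)⟩
  · intro u
    apply Finset.card_lt_card
    apply Finset.filter_ssubset.2
    exact ⟨c u, hcC u, by simp⟩
  · intro u
    simp only [σ]
    split_ifs
    · simp
    · refine (abs_real_inner_le_norm _ _).trans ?_
      rw [he, one_mul]; exact hw u
  · intro u v h
    have ha := hreq' u v h
    have hB : B (c u) = B (c v) := by
      have h1 := hle u _ (hcC v)
      have h2 := hle v _ (hcC u)
      rw [ha] at h1 h2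
      linarith
    have heq : ‖q + v • e - c v‖ = ‖q + v • e - c u‖ := by
      rw [← sq_eq_sq₀ (norm_nonneg _) (norm_nonneg _), hsq, hsq, ha, hB]
    rw [hinf, hinf, heq]
    simp only [σ]
    split_ifs with hτ
    · rw [max_eq_right (by linarith)]
      simp
    · rw [max_eq_left (by linarith)]
      refine le_trans ?_ (le_max_left _ _)
      have h1 : inner ℝ (q + v • e - c u) (w u) ≤ ‖q + v • e - c u‖ := by
        refine (real_inner_le_norm _ _).trans ?_
        exact mul_le_of_le_one_right (norm_nonneg _) (hw u)
      have h2 : q + v • e - c u = (q + u • e - c u) + (v - u) • e := by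
        rw [sub_smul]; abel
      have h3 : inner ℝ (q + u • e - c u) (w u) = ‖q + u • e - c u‖ := by
        simp only [w, inner_smul_right, real_inner_self_eq_norm_sq]
        by_cases h0 : ‖q + u • e - c u‖ = 0
        · simp [h0]
        · field_simp
      rw [h2, inner_add_left, h3, inner_smul_left] at h1
      rw [h2]
      simp at h1
      linarith

theorem h_mean_mem (d : ℕ) (Y : Finset (EuclideanSpace ℝ (Fin d))) (hY : Y.Nonempty) :
    meanP d Y ∈ convexHull ℝ (Y : Set (EuclideanSpace ℝ (Fin d))) := by
  have hc : (0 : ℝ) < Y.card := by exact_mod_cast hY.card_pos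
  unfold meanP
  rw [Finset.smul_sum]
  apply (convex_convexHull ℝ _).sum_mem
  · intro i _; positivity
  · simp [hc.ne']
  · intro i hi; exact subset_convexHull ℝ _ hi

theorem h_mean_sum (d : ℕ) (Y : Finset (EuclideanSpace ℝ (Fin d))) (hY : Y.Nonempty) :
    ∑ y ∈ Y, (y - meanP d Y) = 0 := by
  have hc : (Y.card : ℝ) ≠ 0 := by exact_mod_cast hY.card_pos.ne'
  rw [Finset.sum_sub_distrib, Finset.sum_const, meanP, ← Nat.cast_smul_eq_nsmul ℝ, smul_smul,
    mul_inv_cancel₀ hc, one_smul, sub_self]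

theorem h_line_coord (d : ℕ) (L : AffineSubspace ℝ (EuclideanSpace ℝ (Fin d)))
    (hL : Module.finrank ℝ L.direction = 1) (q : EuclideanSpace ℝ (Fin d)) (hq : q ∈ L) :
    ∃ e : EuclideanSpace ℝ (Fin d), ‖e‖ = 1 ∧ ∀ x ∈ L, x = q + (inner ℝ e (x - q)) • e := by
  obtain ⟨v, hv, hspan⟩ := finrank_eq_one_iff'.1 hL
  have hv0 : ‖(v : EuclideanSpace ℝ (Fin d))‖ ≠ 0 := by simpa using hv
  refine ⟨‖(v : EuclideanSpace ℝ (Fin d))‖⁻¹ • (v : EuclideanSpace ℝ (Fin d)), ?_, ?_⟩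
  · rw [norm_smul, norm_inv, norm_norm, inv_mul_cancel₀ hv0]
  · intro x hx
    obtain ⟨c, hc⟩ := hspan ⟨x - q, AffineSubspace.vsub_mem_direction hx hq⟩
    have hc' : x - q = c • (v : EuclideanSpace ℝ (Fin d)) := by
      have := congrArg Subtype.val hc
      simpa using this.symm
    have hx' : x = q + c • (v : EuclideanSpace ℝ (Fin d)) := by rw [← hc']; abel
    rw [hc', inner_smul_left, inner_smul_right, real_inner_self_eq_norm_sq, smul_smul]
    conv_lhs => rw [hx']
    congr 2
    simp
    field_simp

theorem h_per_line (d k : ℕ) (hk : 1 ≤ k) (L : AffineSubspace ℝ (EuclideanSpace ℝ (Fin d)))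
    (hL : Module.finrank ℝ L.direction = 1) (Xl : Finset (EuclideanSpace ℝ (Fin d)))
    (hXL : ∀ x ∈ Xl, x ∈ L) (S : Finset (Finset (EuclideanSpace ℝ (Fin d))))
    (hne : ∀ Y ∈ S, Y.Nonempty)
    (hcont : ∀ Y ∈ S, (Y : Set (EuclideanSpace ℝ (Fin d))) =
          convexHull ℝ (Y : Set (EuclideanSpace ℝ (Fin d))) ∩
            (Xl : Set (EuclideanSpace ℝ (Fin d))))
    (huniq : ∀ Y ∈ S, ∀ Y' ∈ S, ∀ x, x ∈ Y → x ∈ Y' → Y = Y')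
    (η : ℝ) (hη : 0 ≤ η) (hδ : ∀ Y ∈ S, deltaP d Y ≤ η)
    (C : Finset (EuclideanSpace ℝ (Fin d))) (hCk : C.card = k) (hC : C.Nonempty) (τ : ℝ)
    (F : EuclideanSpace ℝ (Fin d) → ℝ)
    (hF : F = fun x => max (Metric.infDist x (C : Set (EuclideanSpace ℝ (Fin d))) - τ) 0) :
    ∑ Y ∈ S, |∑ y ∈ Y, (F y - F (meanP d Y))| ≤ 3 * k * η := by
  classical
  have hYX : ∀ Y ∈ S, ∀ y ∈ Y, y ∈ Xl := by
    intro Y hY y hy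
    have : y ∈ (Y : Set (EuclideanSpace ℝ (Fin d))) := hy
    rw [hcont Y hY] at this
    exact this.2
  rcases Xl.eq_empty_or_nonempty with hX | ⟨q, hq⟩
  · have : S = ∅ := by
      apply Finset.eq_empty_of_forall_notMem
      intro Y hY
      obtain ⟨y, hy⟩ := hne Y hY
      have := hYX Y hY y hy
      simp [hX] at this
    rw [this]; simp; positivity
  obtain ⟨e, he, hcoord⟩ := h_line_coord d L hL q (hXL q hq)
  obtain ⟨r, σ, hr, hrk, hσ, hsub⟩ := h_line C hC q e he τ
  let u : EuclideanSpace ℝ (Fin d) → ℝ := fun x => inner ℝ e (x - q)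
  let f : ℝ → ℝ := fun t => F (q + t • e)
  have hFu : ∀ x ∈ L, F x = f (u x) := by
    intro x hx
    show F x = F (q + (inner ℝ e (x - q)) • e)
    rw [← hcoord x hx]
  have hf : ∀ s t, |f s - f t| ≤ |s - t| := by
    intro s t
    simp only [f, hF]
    refine (abs_max_sub_max_le_abs _ _ _).trans ?_
    have h1 := (Metric.lipschitz_infDist_pt (C : Set (EuclideanSpace ℝ (Fin d)))).dist_le_mul
      (q + s • e) (q + t • e)
    rw [Real.dist_eq, dist_add_left, dist_eq_norm, ← sub_smul, norm_smul, he] at h1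
    simpa using h1
  have hsub' : ∀ s t, r s = r t → f s + σ s * (t - s) ≤ f t := by
    intro s t h
    simpa only [f, hF] using hsub s t h
  have hmono := h_phi_mono f r σ hr hσ hsub'
  have hmin : ∀ Y : Finset (EuclideanSpace ℝ (Fin d)), ∃ y : EuclideanSpace ℝ (Fin d),
      Y ∈ S → y ∈ Y ∧ ∀ z ∈ Y, u y ≤ u z := by
    intro Y
    by_cases h : Y ∈ S
    · obtain ⟨y, hy, h1⟩ := Finset.exists_min_image Y u (hne Y h)
      exact ⟨y, fun _ => ⟨hy, h1⟩⟩
    · exact ⟨0, fun h' => absurd h' h⟩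
  have hmax : ∀ Y : Finset (EuclideanSpace ℝ (Fin d)), ∃ y : EuclideanSpace ℝ (Fin d),
      Y ∈ S → y ∈ Y ∧ ∀ z ∈ Y, u z ≤ u y := by
    intro Y
    by_cases h : Y ∈ S
    · obtain ⟨y, hy, h1⟩ := Finset.exists_max_image Y u (hne Y h)
      exact ⟨y, fun _ => ⟨hy, h1⟩⟩
    · exact ⟨0, fun h' => absurd h' h⟩
  choose α hα using hmin
  choose β hβ using hmax
  have hseg : ∀ Y ∈ S, ∀ x ∈ Xl, u (α Y) ≤ u x → u x ≤ u (β Y) → x ∈ Y := by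
    intro Y hY x hx h1 h2
    have : x ∈ (Y : Set (EuclideanSpace ℝ (Fin d))) := by
      rw [hcont Y hY]
      refine ⟨?_, hx⟩
      have hs := segment_subset_convexHull (𝕜 := ℝ)
        (s := (Y : Set (EuclideanSpace ℝ (Fin d)))) (hα Y hY).1 (hβ Y hY).1
      apply hs
      have h3 : u x ∈ segment ℝ (u (α Y)) (u (β Y)) := by
        rw [segment_eq_Icc (h1.trans h2)]; exact ⟨h1, h2⟩
      obtain ⟨s, t, hs0, ht0, hst, hsx⟩ := h3
      refine ⟨s, t, hs0, ht0, hst, ?_⟩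
      have e1 : α Y = q + u (α Y) • e := hcoord _ (hXL _ (hYX Y hY _ (hα Y hY).1))
      have e2 : β Y = q + u (β Y) • e := hcoord _ (hXL _ (hYX Y hY _ (hβ Y hY).1))
      have e3 : x = q + u x • e := hcoord _ (hXL _ hx)
      simp only [smul_eq_mul] at hsx
      rw [e3, ← hsx]
      generalize u (α Y) = A at e1 ⊢
      generalize u (β Y) = B at e2 ⊢
      rw [e1, e2]
      have ht : t = 1 - s := by linarith
      rw [ht]
      module
    exact this
  have hmain : ∀ Y ∈ S, |∑ y ∈ Y, (F y - F (meanP d Y))| ≤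
      η * ((3 * (r (u (β Y)) : ℝ) + σ (u (β Y))) - (3 * (r (u (α Y)) : ℝ) + σ (u (α Y)))) := by
    intro Y hY
    obtain ⟨hαY, hα'⟩ := hα Y hY
    obtain ⟨hβY, hβ'⟩ := hβ Y hY
    have hμL : meanP d Y ∈ L := by
      have : convexHull ℝ (Y : Set (EuclideanSpace ℝ (Fin d))) ⊆ L :=
        convexHull_min (fun y hy => hXL y (hYX Y hY y hy)) L.convex
      exact this (h_mean_mem d Y (hne Y hY))
    have hdiff : ∀ y, u y - u (meanP d Y) = inner ℝ e (y - meanP d Y) := by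
      intro y
      simp only [u]
      rw [← inner_sub_right]
      congr 1; abel
    have hsum : ∑ y ∈ Y, (u y - u (meanP d Y)) = 0 := by
      simp only [hdiff]
      rw [← inner_sum, h_mean_sum d Y (hne Y hY), inner_zero_right]
    have hnorm : ∀ y ∈ Y, |u y - u (meanP d Y)| = ‖y - meanP d Y‖ := by
      intro y hy
      have e1 : y = q + u y • e := hcoord _ (hXL _ (hYX Y hY _ hy))
      have e2 : meanP d Y = q + u (meanP d Y) • e := hcoord _ hμL
      have : y - meanP d Y = (u y - u (meanP d Y)) • e := by
        conv_lhs => rw [e1, e2]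
        rw [sub_smul]; abel
      rw [this, norm_smul, he, mul_one, Real.norm_eq_abs]
    have ham : u (α Y) ≤ u (meanP d Y) := by
      by_contra hcon
      have : 0 < ∑ y ∈ Y, (u y - u (meanP d Y)) :=
        Finset.sum_pos (fun y hy => by have := hα' y hy; linarith) (hne Y hY)
      linarith
    have hmb : u (meanP d Y) ≤ u (β Y) := by
      by_contra hcon
      have : 0 < ∑ y ∈ Y, -(u y - u (meanP d Y)) :=
        Finset.sum_pos (fun y hy => by have := hβ' y hy; linarith) (hne Y hY)
      rw [Finset.sum_neg_distrib] at this
      linarith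
    have key := h_interval_err f r σ hr hf hσ hsub' Y u (u (meanP d Y)) (u (α Y)) (u (β Y)) hsum
      (fun y hy => ⟨hα' y hy, hβ' y hy⟩) ham hmb
    have e1 : ∑ y ∈ Y, (F y - F (meanP d Y)) = ∑ y ∈ Y, (f (u y) - f (u (meanP d Y))) :=
      Finset.sum_congr rfl fun y hy => by
        rw [hFu y (hXL _ (hYX Y hY _ hy)), hFu _ hμL]
    rw [Finset.sum_congr rfl hnorm] at key
    rw [e1]
    refine key.trans ?_
    apply mul_le_mul_of_nonneg_right (hδ Y hY)
    have := hmono (ham.trans hmb)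
    simp only at this
    linarith
  refine (Finset.sum_le_sum hmain).trans ?_
  rw [← Finset.mul_sum]
  have hk1 : (1 : ℝ) ≤ k := by exact_mod_cast hk
  have hfin := h_sum_intervals S (fun Y => u (α Y)) (fun Y => u (β Y))
    (fun x => 3 * (r x : ℝ) + σ x) hmono (-1)
    (fun x => by
      have := abs_le.1 (hσ x)
      have : (0 : ℝ) ≤ r x := Nat.cast_nonneg _
      linarith)
    (fun Y hY => (hα Y hY).2 _ (hβ Y hY).1)
    (by
      intro Y hY Y' hY' hne'
      by_contra hcon
      push Not at hcon
      obtain ⟨h1, h2⟩ := hcon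
      apply hne'
      rcases le_total (u (α Y)) (u (α Y')) with h | h
      · exact huniq Y hY Y' hY' (α Y')
          (hseg Y hY _ (hYX Y' hY' _ (hα Y' hY').1) h h1) (hα Y' hY').1
      · exact huniq Y hY Y' hY' (α Y) (hα Y hY).1
          (hseg Y' hY' _ (hYX Y hY _ (hα Y hY).1) h h2))
    (3 * k - 1) (by linarith)
    (by
      intro Y hY
      have := abs_le.1 (hσ (u (β Y)))
      have : (r (u (β Y)) : ℝ) + 1 ≤ k := by rw [← hCk]; exact_mod_cast hrk _
      show 3 * (r (u (β Y)) : ℝ) + σ (u (β Y)) ≤ _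
      linarith)
  have := mul_le_mul_of_nonneg_left hfin hη
  refine this.trans (le_of_eq ?_)
  ring

end helpers

theorem stmt_10 :
    ∃ K : ℝ, 0 < K ∧
      ∀ (d k n m p : ℕ), 1 ≤ k → 1 ≤ p → p ≤ n →
      ∀ ε : ℝ, ε ∈ Set.Ioo (0 : ℝ) 1 →
      ∀ X : Finset (EuclideanSpace ℝ (Fin d)), X.card = n →
      -- a collection of lines
      ∀ L : Fin m → AffineSubspace ℝ (EuclideanSpace ℝ (Fin d)),
        (∀ l, Module.finrank ℝ (L l).direction = 1) →
      -- `X` is partitioned into `Xl l ⊆ L l`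
      ∀ Xl : Fin m → Finset (EuclideanSpace ℝ (Fin d)),
        (∀ l, Xl l ⊆ X) →
        (∀ l, ∀ x ∈ Xl l, x ∈ L l) →
        (∀ x ∈ X, ∃! l, x ∈ Xl l) →
      -- each `Xl l` is partitioned into a family `Yfam l` of nonempty sub-intervals
      ∀ Yfam : Fin m → Finset (Finset (EuclideanSpace ℝ (Fin d))),
        (∀ l, ∀ Y ∈ Yfam l, Y.Nonempty) →
        -- contiguity: `Y = I(Y) ∩ Xl l`
        (∀ l, ∀ Y ∈ Yfam l, (Y : Set (EuclideanSpace ℝ (Fin d))) =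
          convexHull ℝ (Y : Set (EuclideanSpace ℝ (Fin d))) ∩
            (Xl l : Set (EuclideanSpace ℝ (Fin d)))) →
        (∀ l, ∀ x ∈ Xl l, ∃! Y, Y ∈ Yfam l ∧ x ∈ Y) →
      ∀ (s : ℝ) (t : Fin m → ℝ), 0 < s → (∀ l, 0 < t l) →
        -- each sub-interval is either short or has small cumulative error
        (∀ l, ∀ Y ∈ Yfam l,
          Metric.diam (convexHull ℝ (Y : Set (EuclideanSpace ℝ (Fin d)))) ≤ (ε / p) * s ∨
            deltaP d Y ≤ (ε / k) * t l) →
      -- conclusion: the multiset of means (with multiplicities) is a good summary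
      ∀ C : Finset (EuclideanSpace ℝ (Fin d)), C.card = k → C.Nonempty →
        |costP d p (∑ l : Fin m, ∑ Y ∈ Yfam l, Multiset.replicate Y.card (meanP d Y)) C -
          costP d p X.val C| ≤ K * ε * (s + ∑ l : Fin m, t l) := by
  refine ⟨3, by norm_num, ?_⟩
  intro d k n m p hk hp hpn ε hε X hX L hL Xl hXlX hXlL hXpart Yfam hne hcont hYpart s t hs ht
    hYs C hCk hC
  classical
  obtain ⟨hε0, hε1⟩ := hε
  have hp0 : (0 : ℝ) < p := by exact_mod_cast hp
  have hk0 : (0 : ℝ) < k := by exact_mod_cast hk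
  set D := ∑ l : Fin m, ∑ Y ∈ Yfam l, Multiset.replicate Y.card (meanP d Y) with hD
  have hYX : ∀ l, ∀ Y ∈ Yfam l, ∀ y ∈ Y, y ∈ Xl l := by
    intro l Y hY y hy
    have : y ∈ (Y : Set (EuclideanSpace ℝ (Fin d))) := hy
    rw [hcont l Y hY] at this
    exact this.2
  have huniq : ∀ l, ∀ Y ∈ Yfam l, ∀ Y' ∈ Yfam l, ∀ x, x ∈ Y → x ∈ Y' → Y = Y' := by
    intro l Y hY Y' hY' x hx hx'
    exact (hYpart l x (hYX l Y hY x hx)).unique ⟨hY, hx⟩ ⟨hY', hx'⟩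
  have hsumX : ∀ G : EuclideanSpace ℝ (Fin d) → ℝ,
      ∑ x ∈ X, G x = ∑ l : Fin m, ∑ Y ∈ Yfam l, ∑ y ∈ Y, G y := by
    intro G
    have h1 : X = Finset.univ.biUnion Xl := by
      ext x
      simp only [Finset.mem_biUnion, Finset.mem_univ, true_and]
      exact ⟨fun hx => (hXpart x hx).exists, fun ⟨l, hl⟩ => hXlX l hl⟩
    rw [h1, Finset.sum_biUnion]
    · apply Finset.sum_congr rfl
      intro l _
      have h2 : Xl l = (Yfam l).biUnion id := by
        ext x
        simp only [Finset.mem_biUnion, id]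
        exact ⟨fun hx => (hYpart l x hx).exists, fun ⟨Y, hY, hx⟩ => hYX l Y hY x hx⟩
      rw [h2, Finset.sum_biUnion]
      · rfl
      · intro Y hY Y' hY' hne'
        refine Finset.disjoint_left.2 fun x hx hx' => hne' (huniq l Y hY Y' hY' x hx hx')
    · intro l _ l' _ hne'
      refine Finset.disjoint_left.2 fun x hx hx' => hne' ?_
      exact (hXpart x (hXlX l hx)).unique hx hx'
  have hsumD : ∀ G : EuclideanSpace ℝ (Fin d) → ℝ,
      (D.map G).sum = ∑ l : Fin m, ∑ Y ∈ Yfam l, ∑ y ∈ Y, G (meanP d Y) := by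
    intro G
    rw [hD, ← Multiset.coe_mapAddMonoidHom, map_sum, ← Multiset.coe_sumAddMonoidHom, map_sum]
    apply Finset.sum_congr rfl
    intro l _
    rw [map_sum, map_sum]
    apply Finset.sum_congr rfl
    intro Y _
    simp
  have hcardD : D.card = n := by
    have h1 := hsumX (fun _ => 1)
    have h2 := hsumD (fun _ => 1)
    rw [← h1] at h2
    simp at h2
    rw [← hX]; exact_mod_cast h2
  set ρ : EuclideanSpace ℝ (Fin d) → ℝ :=
    fun x => Metric.infDist x (C : Set (EuclideanSpace ℝ (Fin d))) with hρ
  set η : ℝ := ε / p * s with hηdef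
  have hη : 0 < η := by positivity
  have hpη : p * η = ε * s := by rw [hηdef]; field_simp
  have hline : ∀ (τ : ℝ) (l : Fin m),
      ∑ Y ∈ Yfam l, ∑ y ∈ Y, max (ρ (meanP d Y) - (τ + η)) 0
        ≤ (∑ Y ∈ Yfam l, ∑ y ∈ Y, max (ρ y - τ) 0) + 3 * ε * t l ∧
      ∑ Y ∈ Yfam l, ∑ y ∈ Y, max (ρ y - (τ + η)) 0
        ≤ (∑ Y ∈ Yfam l, ∑ y ∈ Y, max (ρ (meanP d Y) - τ) 0) + 3 * ε * t l := by
    intro τ l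
    set F : EuclideanSpace ℝ (Fin d) → ℝ := fun x => max (ρ x - τ) 0 with hF
    set F' : EuclideanSpace ℝ (Fin d) → ℝ := fun x => max (ρ x - (τ + η)) 0 with hF'
    have hFF : ∀ x, F' x ≤ F x := fun x => max_le_max (by linarith) le_rfl
    set S := (Yfam l).filter fun Y => deltaP d Y ≤ (ε / k) * t l with hS
    have htl := ht l
    have hb := h_per_line d k hk (L l) (hL l) (Xl l) (hXlL l) S
      (fun Y hY => hne l Y (Finset.mem_of_mem_filter Y hY))
      (fun Y hY => hcont l Y (Finset.mem_of_mem_filter Y hY))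
      (fun Y hY Y' hY' => huniq l Y (Finset.mem_of_mem_filter Y hY) Y'
        (Finset.mem_of_mem_filter Y' hY')) ((ε / k) * t l) (by positivity)
      (fun Y hY => (Finset.mem_filter.1 hY).2) C hCk hC τ F rfl
    have hb2 : 3 * (k : ℝ) * ((ε / k) * t l) = 3 * ε * t l := by field_simp
    rw [hb2] at hb
    have hb3 : ∑ Y ∈ Yfam l, (if deltaP d Y ≤ (ε / k) * t l then
        |∑ y ∈ Y, (F y - F (meanP d Y))| else 0) ≤ 3 * ε * t l := by
      rw [← Finset.sum_filter]; exact hb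
    have hshort : ∀ Y ∈ Yfam l, ¬ deltaP d Y ≤ (ε / k) * t l → ∀ y ∈ Y,
        |ρ y - ρ (meanP d Y)| ≤ η := by
      intro Y hY hnot y hy
      have hdiam := (hYs l Y hY).resolve_right hnot
      refine le_trans ?_ hdiam
      have h1 := (Metric.lipschitz_infDist_pt (C : Set (EuclideanSpace ℝ (Fin d)))).dist_le_mul
        y (meanP d Y)
      rw [Real.dist_eq] at h1
      simp only [NNReal.coe_one, one_mul] at h1
      refine h1.trans (Metric.dist_le_diam_of_mem ?_ ?_ ?_)
      · exact isBounded_convexHull.2 Y.finite_toSet.isBounded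
      · exact subset_convexHull ℝ _ hy
      · exact h_mean_mem d Y (hne l Y hY)
    constructor
    · refine le_trans ?_ (add_le_add_right hb3 _)
      rw [← Finset.sum_add_distrib]
      apply Finset.sum_le_sum
      intro Y hY
      split_ifs with hd
      · have h1 : ∑ y ∈ Y, F' (meanP d Y) ≤ ∑ y ∈ Y, F (meanP d Y) :=
          Finset.sum_le_sum fun _ _ => hFF _
        have h2 := neg_abs_le (∑ y ∈ Y, (F y - F (meanP d Y)))
        rw [Finset.sum_sub_distrib] at h2 ⊢
        change ∑ y ∈ Y, F' (meanP d Y) ≤ ∑ y ∈ Y, F y + _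
        linarith
      · rw [add_zero]
        apply Finset.sum_le_sum
        intro y hy
        have := abs_le.1 (hshort Y hY hd y hy)
        exact max_le_max (by linarith) le_rfl
    · refine le_trans ?_ (add_le_add_right hb3 _)
      rw [← Finset.sum_add_distrib]
      apply Finset.sum_le_sum
      intro Y hY
      split_ifs with hd
      · have h1 : ∑ y ∈ Y, F' y ≤ ∑ y ∈ Y, F y :=
          Finset.sum_le_sum fun _ _ => hFF _
        have h2 := le_abs_self (∑ y ∈ Y, (F y - F (meanP d Y)))
        rw [Finset.sum_sub_distrib] at h2 ⊢
        change ∑ y ∈ Y, F' y ≤ ∑ y ∈ Y, F (meanP d Y) + _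
        linarith
      · rw [add_zero]
        apply Finset.sum_le_sum
        intro y hy
        have := abs_le.1 (hshort Y hY hd y hy)
        exact max_le_max (by linarith) le_rfl
  have hcX : p ≤ (X.val.map ρ).card := by
    rw [Multiset.card_map]; exact hpn.trans hX.ge
  have hcD : p ≤ (D.map ρ).card := by
    rw [Multiset.card_map, hcardD]; exact hpn
  have hXs : ∀ τ, ((X.val.map ρ).map fun v => max (v - τ) 0).sum
      = ∑ l : Fin m, ∑ Y ∈ Yfam l, ∑ y ∈ Y, max (ρ y - τ) 0 := by
    intro τ
    rw [Multiset.map_map, ← hsumX (fun x => max (ρ x - τ) 0)]; rfl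
  have hDs : ∀ τ, ((D.map ρ).map fun v => max (v - τ) 0).sum
      = ∑ l : Fin m, ∑ Y ∈ Yfam l, ∑ y ∈ Y, max (ρ (meanP d Y) - τ) 0 := by
    intro τ
    rw [Multiset.map_map, ← hsumD (fun x => max (ρ x - τ) 0)]; rfl
  have hεs : 0 < ε * s := by positivity
  change |topP p (D.map ρ) - topP p (X.val.map ρ)| ≤ _
  rw [abs_le]
  constructor
  · obtain ⟨τ, hτ⟩ := h_topP_eq p hp _ hcD
    have h1 := h_topP_le p _ hcX (τ + η)
    rw [hXs] at h1
    rw [hDs] at hτ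
    have h2 := Finset.sum_le_sum fun l (_ : l ∈ Finset.univ) => (hline τ l).2
    rw [Finset.sum_add_distrib, ← Finset.mul_sum] at h2
    nlinarith
  · obtain ⟨τ, hτ⟩ := h_topP_eq p hp _ hcX
    have h1 := h_topP_le p _ hcD (τ + η)
    rw [hDs] at h1
    rw [hXs] at hτ
    have h2 := Finset.sum_le_sum fun l (_ : l ∈ Finset.univ) => (hline τ l).1
    rw [Finset.sum_add_distrib, ← Finset.mul_sum] at h2
    nlinarith
end

section
/- For every ε ∈ (0,1) and every finite set X ⊂ ℝ of n points and every p ∈ {1,…,n}, there exists a finite multiset D of points in ℝ (a finite set with positive integer multiplicities) whose number of distinct points is at most K/ε for a universal constant K, whose total multiplicity is n, and such that for every center y ∈ ℝ: |cost_p(D,{y}) − cost_p(X,{y})| ≤ ε·opt, where opt := min_{y*∈ℝ} cost_p(X,{y*}). In particular, since cost_p(X,{y}) ≥ opt for all y, D is an ε-coreset: cost_p(D,{y}) ∈ [(1−ε)·cost_p(X,{y}), (1+ε)·cost_p(X,{y})] for every y ∈ ℝ. -/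
/-- The p-Centrum objective with one facility `y ∈ ℝ`: the sum of the `p` largest
distances `|x - y|` over the points of the multiset `s`, counted with multiplicity. -/
noncomputable def cost1 (p : ℕ) (s : Multiset ℝ) (y : ℝ) : ℝ :=
  topP p (s.map fun x => |x - y|)

open Finset

/-- Exchange lemma. -/
theorem exch_le (f : ℕ → ℝ) (S T : Finset ℕ) (hc : S.card = T.card)
    (h : ∀ a ∈ S \ T, ∀ b ∈ T \ S, f a ≤ f b) : ∑ i ∈ S, f i ≤ ∑ i ∈ T, f i := by
  have hcard : (S \ T).card = (T \ S).card := by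
    have h1 := Finset.card_sdiff_add_card_inter S T
    have h2 := Finset.card_sdiff_add_card_inter T S
    rw [Finset.inter_comm] at h2
    omega
  have key : ∑ i ∈ S \ T, f i ≤ ∑ i ∈ T \ S, f i := by
    rcases (T \ S).eq_empty_or_nonempty with he | hne
    · have : S \ T = ∅ := by
        rw [← Finset.card_eq_zero, hcard, he]; rfl
      rw [this, he]
    · obtain ⟨m, hm, hmin⟩ := Finset.exists_min_image (T \ S) f hne
      calc ∑ i ∈ S \ T, f i ≤ (S \ T).card • f m :=
            Finset.sum_le_card_nsmul _ _ _ (fun a ha => h a ha m hm)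
        _ = (T \ S).card • f m := by rw [hcard]
        _ ≤ _ := Finset.card_nsmul_le_sum _ _ _ hmin
  have h1 := Finset.sum_inter_add_sum_sdiff S T f
  have h2 := Finset.sum_inter_add_sum_sdiff T S f
  rw [Finset.inter_comm] at h2
  linarith

theorem topP_spec (n p : ℕ) (hp : p ≤ n) (f : ℕ → ℝ) :
    ∃ T ⊆ range n, T.card = p ∧ topP p ((Multiset.range n).map f) = ∑ i ∈ T, f i ∧
      ∀ a ∈ range n \ T, ∀ b ∈ T, f a ≤ f b := by
  classical
  let r : ℕ → ℕ → Prop := fun a b => f b ≤ f a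
  have : Std.Total r := ⟨fun a b => le_total (f b) (f a)⟩
  have : IsTrans ℕ r := ⟨fun a b c h1 h2 => le_trans h2 h1⟩
  set l := (List.range n).insertionSort r with hl
  have hperm : l.Perm (List.range n) := List.perm_insertionSort r _
  have hpw : l.Pairwise r := List.pairwise_insertionSort r _
  have hnd : l.Nodup := hperm.nodup_iff.mpr List.nodup_range
  have hlen : l.length = n := by rw [hperm.length_eq, List.length_range]
  have hsort : (((Multiset.range n).map f).sort (· ≤ ·)).reverse = l.map f := by
    have h1 : ((Multiset.range n).map f).sort (· ≤ ·) = (l.map f).reverse := by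
      apply List.Perm.eq_of_pairwise' (r := (· ≤ ·))
      · exact Multiset.pairwise_sort _ _
      · rw [List.pairwise_reverse, List.pairwise_map]
        exact hpw
      · apply Multiset.coe_eq_coe.mp
        rw [Multiset.sort_eq, Multiset.coe_reverse, ← Multiset.map_coe,
          Multiset.coe_eq_coe.mpr hperm]
        rfl
    rw [h1, List.reverse_reverse]
  have hndt : (l.take p).Nodup := hnd.sublist (List.take_sublist _ _)
  refine ⟨(l.take p).toFinset, ?_, ?_, ?_, ?_⟩
  · intro a ha
    have := List.mem_of_mem_take (List.mem_toFinset.mp ha)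
    simpa using hperm.mem_iff.mp this
  · rw [List.toFinset_card_of_nodup hndt, List.length_take, hlen]; omega
  · rw [topP, hsort, List.sum_toFinset _ hndt, List.map_take]
  · intro a ha b hb
    rw [Finset.mem_sdiff, List.mem_toFinset] at ha
    rw [List.mem_toFinset] at hb
    have hal : a ∈ l := hperm.mem_iff.mpr (by simpa using ha.1)
    rw [← List.take_append_drop p l] at hal hpw
    have had : a ∈ l.drop p := (List.mem_append.mp hal).resolve_left ha.2
    exact (List.pairwise_append.mp hpw).2.2 b hb a had

theorem le_topP (n p : ℕ) (hp : p ≤ n) (f : ℕ → ℝ) (hf : ∀ i, 0 ≤ f i) (S : Finset ℕ)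
    (hS : S ⊆ range n) (hc : S.card ≤ p) :
    ∑ i ∈ S, f i ≤ topP p ((Multiset.range n).map f) := by
  obtain ⟨T, hT, hTc, hsum, hT2⟩ := topP_spec n p hp f
  obtain ⟨U, hSU, hU, hUc⟩ := Finset.exists_subsuperset_card_eq hS hc (by simpa using hp)
  rw [hsum]
  calc ∑ i ∈ S, f i ≤ ∑ i ∈ U, f i :=
        Finset.sum_le_sum_of_subset_of_nonneg hSU (fun i _ _ => hf i)
    _ ≤ _ := by
      apply exch_le _ _ _ (by omega)
      intro a ha b hb
      rw [Finset.mem_sdiff] at ha hb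
      exact hT2 a (Finset.mem_sdiff.mpr ⟨hU ha.1, ha.2⟩) b hb.1

theorem topP_le (n p : ℕ) (hp : p ≤ n) (z : ℕ → ℝ) (hz : ∀ i j, i ≤ j → j < n → z i ≤ z j)
    (y : ℝ) : ∃ L R, L + R = p ∧
      topP p ((Multiset.range n).map fun i => |z i - y|) ≤
        ∑ i ∈ range L, |z i - y| + ∑ i ∈ Ico (n - R) n, |z i - y| := by
  classical
  obtain ⟨T, hT, hTc, hsum, -⟩ := topP_spec n p hp (fun i => |z i - y|)
  have hlt : ∀ i ∈ T, i < n := fun i hi => by simpa using hT hi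
  set A := T.filter (fun i => z i < y) with hA
  set B := T.filter (fun i => ¬ z i < y) with hB
  have hcard : A.card + B.card = p := by
    rw [← hTc]; exact Finset.card_filter_add_card_filter_not _
  refine ⟨A.card, B.card, hcard, ?_⟩
  rw [hsum, ← Finset.sum_filter_add_sum_filter_not T (fun i => z i < y)]
  apply add_le_add
  · apply exch_le _ _ _ (by simp [hA])
    intro a ha b hb
    simp only [Finset.mem_sdiff, Finset.mem_filter, Finset.mem_range, not_lt] at ha hb
    have h1 := hz b a (by omega) (hlt a ha.1.1)
    rw [abs_of_neg (by linarith), abs_of_neg (by linarith)]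
    linarith
  · apply exch_le _ _ _ (by rw [Nat.card_Ico, ← hB]; omega)
    intro a ha b hb
    simp only [Finset.mem_sdiff, Finset.mem_filter, Finset.mem_Ico, not_and, not_lt] at ha hb
    have han := hlt a ha.1.1
    have h1 := hz a b (by omega) hb.1.2
    rw [abs_of_nonneg (by linarith), abs_of_nonneg (by linarith)]
    linarith

/-- mean of a bucket -/
noncomputable def bmean (x : ℕ → ℝ) (s b : ℕ) : ℝ := (∑ i ∈ Ico s b, x i) / ((b : ℝ) - s)

/-- cumulative error of a bucket -/
noncomputable def bdev (x : ℕ → ℝ) (s b : ℕ) : ℝ := ∑ i ∈ Ico s b, |x i - bmean x s b|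

theorem bmean_mul (x : ℕ → ℝ) (s b : ℕ) (h : s < b) :
    ((b : ℝ) - s) * bmean x s b = ∑ i ∈ Ico s b, x i := by
  have : (s : ℝ) < b := by exact_mod_cast h
  unfold bmean
  rw [mul_div_cancel₀]
  linarith

theorem sum_const_Ico (s b : ℕ) (h : s ≤ b) (c : ℝ) :
    ∑ _i ∈ Ico s b, c = ((b : ℝ) - s) * c := by
  rw [Finset.sum_const, Nat.card_Ico, nsmul_eq_mul, Nat.cast_sub h]

theorem le_bmean (x : ℕ → ℝ) (hx : Monotone x) (s b : ℕ) (h : s < b) : x s ≤ bmean x s b := by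
  have h0 : (s : ℝ) < b := by exact_mod_cast h
  have h1 := bmean_mul x s b h
  have h2 : ∑ _i ∈ Ico s b, x s ≤ ∑ i ∈ Ico s b, x i :=
    Finset.sum_le_sum fun i hi => hx (Finset.mem_Ico.mp hi).1
  rw [sum_const_Ico s b h.le, ← h1] at h2
  exact le_of_mul_le_mul_left h2 (by linarith)

theorem bmean_le (x : ℕ → ℝ) (hx : Monotone x) (s b : ℕ) (h : s < b) :
    bmean x s b ≤ x (b - 1) := by
  have h0 : (s : ℝ) < b := by exact_mod_cast h
  have h1 := bmean_mul x s b h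
  have h2 : ∑ i ∈ Ico s b, x i ≤ ∑ _i ∈ Ico s b, x (b - 1) :=
    Finset.sum_le_sum fun i hi => hx (by have := (Finset.mem_Ico.mp hi).2; omega)
  rw [sum_const_Ico s b h.le, ← h1] at h2
  exact le_of_mul_le_mul_left h2 (by linarith)

theorem bdev_le (x : ℕ → ℝ) (s b : ℕ) (h : s < b) (c : ℝ) :
    bdev x s b ≤ 2 * ∑ i ∈ Ico s b, |x i - c| := by
  have h0 : (s : ℝ) < b := by exact_mod_cast h
  have h1 := bmean_mul x s b h
  have h2 : ((b : ℝ) - s) * |c - bmean x s b| ≤ ∑ i ∈ Ico s b, |x i - c| := by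
    have : ((b : ℝ) - s) * |c - bmean x s b| = |∑ i ∈ Ico s b, (x i - c)| := by
      rw [Finset.sum_sub_distrib, sum_const_Ico s b h.le, ← h1, ← mul_sub, abs_mul,
        abs_of_pos (by linarith : (0:ℝ) < b - s), abs_sub_comm]
    rw [this]
    exact Finset.abs_sum_le_sum_abs _ _
  have h3 : bdev x s b ≤ ∑ i ∈ Ico s b, (|x i - c| + |c - bmean x s b|) :=
    Finset.sum_le_sum fun i _ => abs_sub_le _ _ _
  rw [Finset.sum_add_distrib, sum_const_Ico s b h.le] at h3
  linarith

theorem bdev_single (x : ℕ → ℝ) (s : ℕ) : bdev x s (s + 1) = 0 := by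
  simp [bdev, bmean]

/-- full bucket, `y` outside: no error -/
theorem berr_zero (x : ℕ → ℝ) (hx : Monotone x) (s b : ℕ) (h : s < b) (y : ℝ)
    (hy : y ≤ x s ∨ x (b - 1) ≤ y) :
    ∑ i ∈ Ico s b, (|x i - y| - |bmean x s b - y|) = 0 := by
  have h1 := bmean_mul x s b h
  have h2 := le_bmean x hx s b h
  have h3 := bmean_le x hx s b h
  rcases hy with hy | hy
  · have : ∑ i ∈ Ico s b, (|x i - y| - |bmean x s b - y|)
        = ∑ i ∈ Ico s b, (x i - bmean x s b) := by
      apply Finset.sum_congr rfl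
      intro i hi
      have := hx (Finset.mem_Ico.mp hi).1
      rw [abs_of_nonneg (by linarith), abs_of_nonneg (by linarith)]; ring
    rw [this, Finset.sum_sub_distrib, sum_const_Ico s b h.le, h1, sub_self]
  · have : ∑ i ∈ Ico s b, (|x i - y| - |bmean x s b - y|)
        = ∑ i ∈ Ico s b, (bmean x s b - x i) := by
      apply Finset.sum_congr rfl
      intro i hi
      have : x i ≤ x (b - 1) := hx (by have := (Finset.mem_Ico.mp hi).2; omega)
      rw [abs_of_nonpos (by linarith), abs_of_nonpos (by linarith)]; ring
    rw [this, Finset.sum_sub_distrib, sum_const_Ico s b h.le, h1, sub_self]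

theorem berr_le (x : ℕ → ℝ) (s b k : ℕ) (hk : k ≤ b) (y : ℝ) :
    |∑ i ∈ Ico s k, (|x i - y| - |bmean x s b - y|)| ≤ bdev x s b := by
  calc _ ≤ ∑ i ∈ Ico s k, |(|x i - y| - |bmean x s b - y|)| := Finset.abs_sum_le_sum_abs _ _
    _ ≤ ∑ i ∈ Ico s k, |x i - bmean x s b| := by
        apply Finset.sum_le_sum
        intro i _
        have := abs_abs_sub_abs_le (x i - y) (bmean x s b - y)
        simpa using this
    _ ≤ bdev x s b := Finset.sum_le_sum_of_subset_of_nonneg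
        (Finset.Ico_subset_Ico le_rfl hk) (fun i _ _ => abs_nonneg _)

/-- `d` is a good rounding of `x` on `[s,e)`. -/
def Good (x : ℕ → ℝ) (t : ℝ) (s e : ℕ) (d : ℕ → ℝ) : Prop :=
  (∀ i j, s ≤ i → i ≤ j → j < e → d i ≤ d j) ∧
  (∀ i, s ≤ i → i < e → x s ≤ d i ∧ d i ≤ x (e - 1)) ∧
  ∀ y k, s ≤ k → k ≤ e →
    |∑ i ∈ Ico s k, (|x i - y| - |d i - y|)| ≤ 2 * t ∧
    (y ≤ x s → |∑ i ∈ Ico s k, (|x i - y| - |d i - y|)| ≤ t)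

theorem good_empty (x : ℕ → ℝ) (t : ℝ) (ht : 0 ≤ t) (s : ℕ) (d : ℕ → ℝ) : Good x t s s d := by
  refine ⟨fun i j _ _ _ => by omega, fun i _ _ => by omega, fun y k h1 h2 => ?_⟩
  obtain rfl : k = s := by omega
  simp [ht]

theorem good_glue (x : ℕ → ℝ) (hx : Monotone x) (t : ℝ) (ht : 0 ≤ t) (s b e : ℕ) (hsb : s < b)
    (hbe : b ≤ e) (hdev : bdev x s b ≤ t) (d : ℕ → ℝ) (hd : Good x t b e d) :
    Good x t s e (fun i => if i < b then bmean x s b else d i) := by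
  obtain ⟨h1, h2, h3⟩ := hd
  have hm1 := le_bmean x hx s b hsb
  have hm2 := bmean_le x hx s b hsb
  refine ⟨fun i j hi hij hj => ?_, fun i hi hie => ?_, fun y k hk hke => ?_⟩
  · dsimp only
    by_cases hib : i < b
    · by_cases hjb : j < b
      · rw [if_pos hib, if_pos hjb]
      · rw [if_pos hib, if_neg hjb]
        have := (h2 j (by omega) hj).1
        have := hx (show b - 1 ≤ b by omega)
        linarith
    · rw [if_neg hib, if_neg (by omega)]
      exact h1 i j (by omega) hij hj
  · dsimp only
    by_cases hib : i < b
    · rw [if_pos hib]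
      exact ⟨hm1, hm2.trans (hx (by omega))⟩
    · rw [if_neg hib]
      have := h2 i (by omega) hie
      exact ⟨(hx hsb.le).trans this.1, this.2⟩
  · have part1 : ∀ k', k' ≤ b → ∑ i ∈ Ico s k', (|x i - y| - |(if i < b then bmean x s b else d i) - y|)
        = ∑ i ∈ Ico s k', (|x i - y| - |bmean x s b - y|) := by
      intro k' hk'
      apply Finset.sum_congr rfl
      intro i hi
      rw [if_pos (by have := (Finset.mem_Ico.mp hi).2; omega)]
    by_cases hkb : k ≤ b
    · rw [part1 k hkb]
      have := berr_le x s b k hkb y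
      exact ⟨by linarith, fun _ => by linarith⟩
    · have part2 : ∑ i ∈ Ico b k, (|x i - y| - |(if i < b then bmean x s b else d i) - y|)
          = ∑ i ∈ Ico b k, (|x i - y| - |d i - y|) := by
        apply Finset.sum_congr rfl
        intro i hi
        rw [if_neg (by have := (Finset.mem_Ico.mp hi).1; omega)]
      rw [← Finset.sum_Ico_consecutive _ hsb.le (by omega : b ≤ k), part1 b le_rfl, part2]
      obtain ⟨g1, g2⟩ := h3 y k (by omega) hke
      refine ⟨?_, fun hy => ?_⟩
      · by_cases hy : y ≤ x s ∨ x (b - 1) ≤ y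
        · rw [berr_zero x hx s b hsb y hy, zero_add]; exact g1
        · push Not at hy
          have g3 := g2 (hy.2.le.trans (hx (by omega)))
          have g4 := berr_le x s b b le_rfl y
          refine (abs_add_le _ _).trans ?_
          linarith
      · rw [berr_zero x hx s b hsb y (Or.inl hy), zero_add]
        exact g2 (hy.trans (hx hsb.le))

theorem image_glue (s b e : ℕ) (m : ℝ) (d : ℕ → ℝ) :
    ((Ico s e).image (fun i => if i < b then m else d i)).card ≤ ((Ico b e).image d).card + 1 := by
  refine le_trans (Finset.card_le_card (t := insert m ((Ico b e).image d)) ?_)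
    (Finset.card_insert_le _ _)
  intro v hv
  obtain ⟨i, hi, rfl⟩ := Finset.mem_image.mp hv
  by_cases h : i < b
  · simp [h]
  · simp only [if_neg h]
    apply Finset.mem_insert_of_mem
    apply Finset.mem_image_of_mem
    rw [Finset.mem_Ico] at hi ⊢
    omega

theorem seg_exists (x : ℕ → ℝ) (hx : Monotone x) (t : ℝ) (ht : 0 ≤ t) (e : ℕ) :
    ∀ m s, s ≤ e → e - s = m → ∃ (d : ℕ → ℝ) (g : ℕ) (Δ : ℝ), Good x t s e d ∧
      ((Ico s e).image d).card ≤ 2 * g + 1 ∧ (g : ℝ) * t ≤ Δ ∧ (0 < g → (g : ℝ) * t < Δ) ∧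
      ∀ c, Δ ≤ 2 * ∑ i ∈ Ico s e, |x i - c| := by
  intro m
  induction m using Nat.strong_induction_on with
  | _ m ih =>
  intro s hse hm
  rcases Nat.eq_or_lt_of_le hse with rfl | hlt
  · exact ⟨x, 0, 0, good_empty x t ht s x, by simp, by simp, by simp, by simp⟩
  by_cases hall : bdev x s e ≤ t
  · refine ⟨_, 0, 0, good_glue x hx t ht s e e hlt le_rfl hall x (good_empty x t ht e x),
      ?_, by simp, by simp, ?_⟩
    · exact (image_glue s e e _ x).trans (by simp)
    · intro c
      have : 0 ≤ ∑ i ∈ Ico s e, |x i - c| := Finset.sum_nonneg fun i _ => abs_nonneg _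
      linarith
  · -- first `b` where the deviation exceeds `t`
    have hex : ∃ b, s < b ∧ ¬ bdev x s b ≤ t := ⟨e, hlt, hall⟩
    classical
    obtain ⟨hb1, hb2⟩ := Nat.find_spec hex
    have hbe : Nat.find hex ≤ e := Nat.find_min' hex ⟨hlt, hall⟩
    have hmin : ∀ k, k < Nat.find hex → ¬ (s < k ∧ ¬ bdev x s k ≤ t) :=
      fun k hk => Nat.find_min hex hk
    generalize Nat.find hex = b' at *
    obtain ⟨b, rfl⟩ : ∃ b, b' = b + 1 := ⟨b' - 1, by omega⟩
    have hsb : s < b := by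
      rcases Nat.eq_or_lt_of_le (by omega : s ≤ b) with h | h
      · subst h
        rw [bdev_single] at hb2
        exact absurd ht hb2
      · exact h
    have hdev : bdev x s b ≤ t := by
      by_contra hc
      exact hmin b (by omega) ⟨hsb, hc⟩
    obtain ⟨d, g, Δ, hG, hcard, hgt, hgt', hΔ⟩ := ih (e - (b + 1)) (by omega) (b + 1) hbe rfl
    refine ⟨_, g + 1, Δ + bdev x s (b + 1),
      good_glue x hx t ht s b e hsb (by omega) hdev _
        (good_glue x hx t ht b (b + 1) e (by omega) hbe (by rw [bdev_single]; exact ht) d hG),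
      ?_, ?_, ?_, ?_⟩
    · have h1 := image_glue s b e (bmean x s b)
        (fun i => if i < b + 1 then bmean x b (b + 1) else d i)
      have h2 := image_glue b (b + 1) e (bmean x b (b + 1)) d
      omega
    · push_cast; push Not at hb2; linarith
    · intro _; push_cast; push Not at hb2; linarith
    · intro c
      rw [← Finset.sum_Ico_consecutive _ (by omega : s ≤ b + 1) hbe]
      have := hΔ c
      have := bdev_le x s (b + 1) hb1 c
      linarith

theorem count_bound (g : ℕ) (Δ ε opt : ℝ) (hε : 0 < ε) (hopt : 0 ≤ opt)
    (h2 : 0 < g → (g : ℝ) * (ε * opt / 8) < Δ) (h3 : Δ ≤ 2 * opt) : (g : ℝ) ≤ 16 / ε := by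
  rcases Nat.eq_zero_or_pos g with rfl | hg
  · simp; positivity
  · have h4 := (h2 hg).trans_le h3
    have hop : 0 < opt := by
      rcases hopt.eq_or_lt with h | h
      · subst h; simp at h4
      · exact h
    rw [le_div_iff₀ hε]
    by_contra hc
    push Not at hc
    nlinarith

theorem exists_seq (X : Finset ℝ) (hX : X.Nonempty) :
    ∃ x : ℕ → ℝ, Monotone x ∧ X.val = (Multiset.range X.card).map x := by
  have hpos : 0 < X.card := hX.card_pos
  let o := X.orderEmbOfFin rfl
  let x : ℕ → ℝ := fun i => o ⟨min i (X.card - 1), by omega⟩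
  have hxm : Monotone x := by
    intro i j hij
    apply o.monotone
    show min i (X.card - 1) ≤ min j (X.card - 1)
    omega
  refine ⟨x, hxm, ?_⟩
  have hinj : Set.InjOn x (range X.card : Finset ℕ) := by
    intro i hi j hj h
    have := congrArg Fin.val (o.injective h)
    simp only [Finset.coe_range, Set.mem_Iio] at hi hj
    simp only at this
    omega
  have himg : X = (range X.card).image x := by
    symm
    apply Finset.eq_of_subset_of_card_le
    · intro v hv
      obtain ⟨i, _, rfl⟩ := Finset.mem_image.mp hv
      exact Finset.orderEmbOfFin_mem X rfl _
    · rw [Finset.card_image_of_injOn hinj, Finset.card_range]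
  have := Finset.image_val_of_injOn hinj
  rw [← himg] at this
  exact this

theorem one_side (n p : ℕ) (z w : ℕ → ℝ) (hp : p ≤ n)
    (hz : ∀ i j, i ≤ j → j < n → z i ≤ z j) (y E : ℝ)
    (hE : ∀ L R, L + R = p → (∑ i ∈ range L, |z i - y| + ∑ i ∈ Ico (n - R) n, |z i - y|)
      - (∑ i ∈ range L, |w i - y| + ∑ i ∈ Ico (n - R) n, |w i - y|) ≤ E) :
    cost1 p ((Multiset.range n).map z) y - cost1 p ((Multiset.range n).map w) y ≤ E := by
  unfold cost1
  rw [Multiset.map_map, Multiset.map_map]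
  obtain ⟨L, R, hLR, h⟩ := topP_le n p hp z hz y
  have hdisj : Disjoint (range L) (Ico (n - R) n) := by
    rw [Finset.disjoint_left]
    intro i hi hi'
    simp only [Finset.mem_range, Finset.mem_Ico] at hi hi'
    omega
  have h2 := le_topP n p hp (fun i => |w i - y|) (fun i => abs_nonneg _)
    (range L ∪ Ico (n - R) n) (by
      intro i hi
      simp only [Finset.mem_union, Finset.mem_range, Finset.mem_Ico] at hi ⊢
      omega) (by
      rw [Finset.card_union_of_disjoint hdisj, Finset.card_range, Nat.card_Ico]; omega)
  rw [Finset.sum_union hdisj] at h2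
  have h3 := hE L R hLR
  simp only [Function.comp_def]
  linarith

theorem stmt_11 :
    ∃ K : ℝ, 0 < K ∧
      ∀ ε : ℝ, ε ∈ Set.Ioo (0 : ℝ) 1 →
      ∀ X : Finset ℝ, X.Nonempty →
      ∀ p : ℕ, 1 ≤ p → p ≤ X.card →
      ∃ D : Multiset ℝ,
        (D.toFinset.card : ℝ) ≤ K / ε ∧
        Multiset.card D = X.card ∧
        ∀ y : ℝ,
          |cost1 p D y - cost1 p X.val y| ≤ ε * (⨅ y' : ℝ, cost1 p X.val y') ∧
          cost1 p D y ∈ Set.Icc ((1 - ε) * cost1 p X.val y) ((1 + ε) * cost1 p X.val y) := by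
  refine ⟨67, by norm_num, ?_⟩
  rintro ε ⟨hε0, hε1⟩ X hX p hp1 hpn
  obtain ⟨x, hx, hXx⟩ := exists_seq X hX
  rw [hXx]
  generalize X.card = n at *
  have hsub : ∀ (S : Finset ℕ) (c : ℝ), S ⊆ range n → S.card ≤ p →
      ∑ i ∈ S, |x i - c| ≤ cost1 p ((Multiset.range n).map x) c := by
    intro S c h1 h2
    unfold cost1
    rw [Multiset.map_map]
    exact le_topP n p hpn (fun i => |x i - c|) (fun i => abs_nonneg _) S h1 h2
  have hnn : ∀ c, 0 ≤ cost1 p ((Multiset.range n).map x) c := by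
    intro c
    simpa using hsub ∅ c (by simp) (by simp)
  set opt := ⨅ y' : ℝ, cost1 p ((Multiset.range n).map x) y' with hopt
  have hopt0 : 0 ≤ opt := Real.iInf_nonneg hnn
  have hopt_le : ∀ y, opt ≤ cost1 p ((Multiset.range n).map x) y := fun y =>
    ciInf_le ⟨0, by rintro _ ⟨c, rfl⟩; exact hnn c⟩ y
  have ht : 0 ≤ ε * opt / 8 := by positivity
  -- the segments
  obtain ⟨b, hpb, hbn, hnb, hb⟩ : ∃ b, p ≤ b ∧ b ≤ n ∧ n - b ≤ p ∧ (b = p ∨ b + p = n) := by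
    by_cases h : 2 * p ≤ n
    · exact ⟨n - p, by omega, by omega, by omega, by omega⟩
    · exact ⟨p, by omega, by omega, by omega, by omega⟩
  obtain ⟨dA, gA, ΔA, ⟨A1, A2, A3⟩, cA, -, gA', hΔA⟩ := seg_exists x hx _ ht p p 0 (by omega) (by omega)
  obtain ⟨dC, gC, ΔC, ⟨C1, C2, C3⟩, cC, -, gC', hΔC⟩ := seg_exists x hx _ ht n (n - b) b hbn rfl
  have bA : (gA : ℝ) ≤ 16 / ε := by
    apply count_bound gA ΔA ε opt hε0 hopt0 gA'
    have : ΔA / 2 ≤ opt := le_ciInf fun c => by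
      have h1 := hΔA c
      have h2 := hsub (Ico 0 p) c (by intro i; simp only [Finset.mem_Ico, Finset.mem_range]; omega)
        (by simp)
      linarith
    linarith
  have bC : (gC : ℝ) ≤ 16 / ε := by
    apply count_bound gC ΔC ε opt hε0 hopt0 gC'
    have : ΔC / 2 ≤ opt := le_ciInf fun c => by
      have h1 := hΔC c
      have h2 := hsub (Ico b n) c (by intro i; simp only [Finset.mem_Ico, Finset.mem_range]; omega)
        (by simpa using hnb)
      linarith
    linarith
  set d : ℕ → ℝ := fun i => if i < p then dA i else if i < b then x p else dC i with hd
  have dmono : ∀ i j, i ≤ j → j < n → d i ≤ d j := by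
    intro i j hij hj
    simp only [hd]
    by_cases hip : i < p
    · rw [if_pos hip]
      have h1 := (A2 i (by omega) hip).2
      have h2 := hx (show p - 1 ≤ p by omega)
      by_cases hjp : j < p
      · rw [if_pos hjp]; exact A1 i j (by omega) hij hjp
      · rw [if_neg hjp]
        by_cases hjb : j < b
        · rw [if_pos hjb]; linarith
        · rw [if_neg hjb]
          have h3 := (C2 j (by omega) hj).1
          have h4 := hx hpb
          linarith
    · rw [if_neg hip, if_neg (by omega : ¬ j < p)]
      by_cases hib : i < b
      · rw [if_pos hib]
        by_cases hjb : j < b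
        · rw [if_pos hjb]
        · rw [if_neg hjb]
          have h3 := (C2 j (by omega) hj).1
          have h4 := hx hpb
          linarith
      · rw [if_neg hib, if_neg (by omega)]
        exact C1 i j (by omega) hij hj
  -- error of prefixes and suffixes
  have EA : ∀ y k, k ≤ p → |∑ i ∈ Ico 0 k, (|x i - y| - |d i - y|)| ≤ 2 * (ε * opt / 8) := by
    intro y k hk
    have h := (A3 y k (by omega) hk).1
    rwa [Finset.sum_congr rfl (g := fun i => |x i - y| - |d i - y|)] at h
    intro i hi
    have : i < p := by have := (Finset.mem_Ico.mp hi).2; omega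
    simp only [hd, if_pos this]
  have EC : ∀ y k, b ≤ k → k ≤ n →
      |∑ i ∈ Ico b k, (|x i - y| - |d i - y|)| ≤ 2 * (ε * opt / 8) := by
    intro y k hk hk'
    have h := (C3 y k hk hk').1
    rwa [Finset.sum_congr rfl (g := fun i => |x i - y| - |d i - y|)] at h
    intro i hi
    have := (Finset.mem_Ico.mp hi).1
    simp only [hd, if_neg (show ¬ i < p by omega), if_neg (show ¬ i < b by omega)]
  have key : ∀ y L R, L + R = p →
      |∑ i ∈ Ico 0 L, (|x i - y| - |d i - y|) + ∑ i ∈ Ico (n - R) n, (|x i - y| - |d i - y|)|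
        ≤ ε * opt := by
    intro y L R hLR
    have h1 := abs_le.mp (EA y L (by omega))
    have h2 := abs_le.mp (EC y n hbn le_rfl)
    by_cases hc : b ≤ n - R
    · have h3 := abs_le.mp (EC y (n - R) hc (by omega))
      rw [← Finset.sum_Ico_consecutive _ hc (by omega : n - R ≤ n)] at h2
      rw [abs_le]
      constructor <;> linarith [h1.1, h1.2, h2.1, h2.2, h3.1, h3.2]
    · obtain rfl : b = p := by omega
      have h3 := abs_le.mp (EA y (n - R) (by omega))
      have h4 := abs_le.mp (EA y b le_rfl)
      rw [← Finset.sum_Ico_consecutive _ (by omega : 0 ≤ n - R) (by omega : n - R ≤ b)] at h4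
      rw [← Finset.sum_Ico_consecutive _ (by omega : n - R ≤ b) hbn, abs_le]
      constructor <;> linarith [h1.1, h1.2, h2.1, h2.2, h3.1, h3.2, h4.1, h4.2]
  have main : ∀ y, |cost1 p ((Multiset.range n).map d) y - cost1 p ((Multiset.range n).map x) y|
      ≤ ε * opt := by
    intro y
    have u1 := one_side n p d x hpn dmono y (ε * opt) (by
      intro L R hLR
      have h := (abs_le.mp (key y L R hLR)).1
      rw [Finset.sum_sub_distrib, Finset.sum_sub_distrib, ← Finset.range_eq_Ico] at h
      linarith)
    have u2 := one_side n p x d hpn (fun i j hij _ => hx hij) y (ε * opt) (by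
      intro L R hLR
      have h := (abs_le.mp (key y L R hLR)).2
      rw [Finset.sum_sub_distrib, Finset.sum_sub_distrib, ← Finset.range_eq_Ico] at h
      linarith)
    rw [abs_le]
    constructor <;> linarith
  refine ⟨(Multiset.range n).map d, ?_, by simp, fun y => ⟨main y, ?_⟩⟩
  · have hsubset : ((Multiset.range n).map d).toFinset ⊆
        insert (x p) ((Ico 0 p).image dA ∪ (Ico b n).image dC) := by
      intro v hv
      rw [Multiset.mem_toFinset, Multiset.mem_map] at hv
      obtain ⟨i, hi, rfl⟩ := hv
      rw [Multiset.mem_range] at hi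
      simp only [hd]
      by_cases h1 : i < p
      · rw [if_pos h1]
        exact Finset.mem_insert_of_mem (Finset.mem_union_left _
          (Finset.mem_image_of_mem _ (by simpa using h1)))
      · rw [if_neg h1]
        by_cases h2 : i < b
        · rw [if_pos h2]; exact Finset.mem_insert_self _ _
        · rw [if_neg h2]
          exact Finset.mem_insert_of_mem (Finset.mem_union_right _
            (Finset.mem_image_of_mem _ (Finset.mem_Ico.mpr ⟨by omega, hi⟩)))
    have hcard : ((Multiset.range n).map d).toFinset.card ≤ 2 * gA + 2 * gC + 3 := by
      have h1 := Finset.card_le_card hsubset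
      have h2 := Finset.card_insert_le (x p) ((Ico 0 p).image dA ∪ (Ico b n).image dC)
      have h3 := Finset.card_union_le ((Ico 0 p).image dA) ((Ico b n).image dC)
      omega
    have hcard' : (((Multiset.range n).map d).toFinset.card : ℝ) ≤ 2 * gA + 2 * gC + 3 := by
      exact_mod_cast hcard
    have h1e : 1 ≤ 1 / ε := by rw [le_div_iff₀ hε0]; linarith
    have e1 : (67 : ℝ) / ε = 2 * (16 / ε) + 2 * (16 / ε) + 3 * (1 / ε) := by ring
    rw [e1]
    linarith
  · have h := abs_le.mp (main y)
    have h2 : ε * opt ≤ ε * cost1 p ((Multiset.range n).map x) y :=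
      mul_le_mul_of_nonneg_left (hopt_le y) hε0.le
    constructor <;> linarith [h.1, h.2]
end

section
/- For every d ∈ ℤ₊ there is a constant K_d > 0 such that the following holds. Given k ∈ ℤ₊, ε ∈ (0,1), a finite set X ⊂ ℝ^d of n points, and p ∈ {1,…,n}, there exists a finite multiset D of points in ℝ^d (points with positive integer multiplicities) whose number of distinct points is at most K_d·k²/ε^{d+1}, such that for every set C ⊂ ℝ^d of k centers: cost_p(D,C) ∈ [(1−ε)·cost_p(X,C), (1+ε)·cost_p(X,C)]. -/
attribute [local instance] Classical.decEq

theorem topP_exists {ι : Type*} (X : Finset ι) (a : ι → ℝ) (p : ℕ) (hp : 1 ≤ p)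
    (hpX : p ≤ X.card) :
    ∃ S ⊆ X, S.card = p ∧ topP p (X.val.map a) = ∑ x ∈ S, a x ∧
      ∃ t, (∀ x ∈ S, t ≤ a x) ∧ ∀ y ∈ X, y ∉ S → a y ≤ t := by
  classical
  let r : ι → ι → Prop := fun x y => a y ≤ a x
  have : Std.Total r := ⟨fun x y => le_total _ _⟩
  have : IsTrans ι r := ⟨fun x y z h1 h2 => le_trans h2 h1⟩
  let l := X.toList.insertionSort r
  have hperm : l.Perm X.toList := List.perm_insertionSort r _
  have hsort : l.Pairwise r := List.pairwise_insertionSort r _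
  have hnd : l.Nodup := hperm.nodup_iff.2 X.nodup_toList
  have hmem : ∀ x, x ∈ l ↔ x ∈ X := fun x => by rw [hperm.mem_iff]; simp
  have hlen : l.length = X.card := by rw [hperm.length_eq]; simp
  have heq : ((X.val.map a).sort (· ≤ ·)).reverse = l.map a := by
    apply List.Perm.eq_of_pairwise (le := fun x y : ℝ => y ≤ x)
    · intro x y _ _ h1 h2; exact le_antisymm h2 h1
    · rw [List.pairwise_reverse]
      exact Multiset.pairwise_sort _ _
    · rw [List.pairwise_map]; exact hsort
    · refine (List.reverse_perm _).trans ?_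
      rw [← Multiset.coe_eq_coe, Multiset.sort_eq, ← Multiset.map_coe]
      congr 1
      rw [Multiset.coe_eq_coe.2 hperm]
      simp
  have hsplit : l.take p ++ l.drop p = l := List.take_append_drop p l
  have hpw : (l.take p ++ l.drop p).Pairwise r := by rw [hsplit]; exact hsort
  have hx := (List.pairwise_append.1 hpw).2.2
  have hnd' : (l.take p).Nodup := hnd.sublist (List.take_sublist _ _)
  have hcard : (l.take p).toFinset.card = p := by
    rw [List.toFinset_card_of_nodup hnd']; simp [hlen, hpX]
  refine ⟨(l.take p).toFinset, ?_, hcard, ?_, ?_⟩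
  · intro x hx
    rw [← hmem]
    exact List.mem_of_mem_take (List.mem_toFinset.1 hx)
  · unfold topP
    rw [heq, ← List.map_take, List.sum_toFinset _ hnd']
  · obtain ⟨m, hm, hmin⟩ := Finset.exists_min_image (l.take p).toFinset a
      (Finset.card_pos.1 (by omega))
    refine ⟨a m, hmin, ?_⟩
    intro y hy hyS
    have : y ∈ l := (hmem y).2 hy
    rw [← hsplit, List.mem_append] at this
    rcases this with h | h
    · exact absurd (List.mem_toFinset.2 h) hyS
    · exact hx m (List.mem_toFinset.1 hm) y h

theorem topP_var {ι : Type*} (X : Finset ι) (a : ι → ℝ) (p : ℕ) (hp : 1 ≤ p)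
    (hpX : p ≤ X.card) :
    ∃ t, topP p (X.val.map a) = p * t + ∑ x ∈ X, max (a x - t) 0 := by
  obtain ⟨S, hS, hc, he, t, h1, h2⟩ := topP_exists X a p hp hpX
  refine ⟨t, ?_⟩
  rw [he, ← Finset.sum_subset hS (f := fun x => max (a x - t) 0)]
  · have : ∑ x ∈ S, max (a x - t) 0 = ∑ x ∈ S, (a x - t) :=
      Finset.sum_congr rfl (fun x hx => max_eq_left (by linarith [h1 x hx]))
    rw [this, Finset.sum_sub_distrib, Finset.sum_const, hc, nsmul_eq_mul]; ring
  · intro x hx hxS; exact max_eq_right (by linarith [h2 x hx hxS])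

theorem sum_le_var {ι : Type*} (X S : Finset ι) (a : ι → ℝ) (hS : S ⊆ X) (t : ℝ) :
    ∑ x ∈ S, a x ≤ S.card * t + ∑ x ∈ X, max (a x - t) 0 := by
  have h1 : ∑ x ∈ S, max (a x - t) 0 ≤ ∑ x ∈ X, max (a x - t) 0 :=
    Finset.sum_le_sum_of_subset_of_nonneg hS (fun _ _ _ => le_max_right _ _)
  have h2 : ∑ x ∈ S, (a x - t) ≤ ∑ x ∈ S, max (a x - t) 0 :=
    Finset.sum_le_sum (fun _ _ => le_max_left _ _)
  rw [Finset.sum_sub_distrib, Finset.sum_const, nsmul_eq_mul] at h2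
  linarith

theorem topP_le_s12 {ι : Type*} (X : Finset ι) (a : ι → ℝ) (p : ℕ) (hp : 1 ≤ p)
    (hpX : p ≤ X.card) (t : ℝ) :
    topP p (X.val.map a) ≤ p * t + ∑ x ∈ X, max (a x - t) 0 := by
  obtain ⟨S, hS, hc, he, -⟩ := topP_exists X a p hp hpX
  rw [he, ← hc]; exact sum_le_var X S a hS t

theorem le_topP_s12 {ι : Type*} (X : Finset ι) (a : ι → ℝ) (p : ℕ) (hp : 1 ≤ p)
    (hpX : p ≤ X.card) (S : Finset ι) (hS : S ⊆ X) (hc : S.card = p) :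
    ∑ x ∈ S, a x ≤ topP p (X.val.map a) := by
  obtain ⟨t, ht⟩ := topP_var X a p hp hpX
  rw [ht, ← hc]; exact sum_le_var X S a hS t

/-- If every size-`p` sub-sum differs by at most `e`, then so do the top-`p` sums. -/
theorem topP_le_of_subset {ι : Type*} (X : Finset ι) (a b : ι → ℝ) (p : ℕ) (hp : 1 ≤ p)
    (hpX : p ≤ X.card) (c : ℝ) (e : ℝ)
    (h : ∀ S ⊆ X, S.card = p → ∑ x ∈ S, a x ≤ c * ∑ x ∈ S, b x + e) (hc0 : 0 ≤ c) :
    topP p (X.val.map a) ≤ c * topP p (X.val.map b) + e := by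
  obtain ⟨S, hS, hc, he, -⟩ := topP_exists X a p hp hpX
  rw [he]
  have := le_topP_s12 X b p hp hpX S hS hc
  have := mul_le_mul_of_nonneg_left this hc0
  linarith [h S hS hc]

theorem topP_le_of_var {ι : Type*} (X : Finset ι) (a b : ι → ℝ) (p : ℕ) (hp : 1 ≤ p)
    (hpX : p ≤ X.card) (e : ℝ)
    (h : ∀ t, ∑ x ∈ X, max (a x - t) 0 ≤ ∑ x ∈ X, max (b x - t) 0 + e) :
    topP p (X.val.map a) ≤ topP p (X.val.map b) + e := by
  obtain ⟨t, ht⟩ := topP_var X b p hp hpX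
  linarith [topP_le_s12 X a p hp hpX t, h t]

/-! One-dimensional part -/

theorem tele (σ : ℝ → ℝ) (L : ℝ) (hmono : Monotone σ) (hL : ∀ x, |σ x| ≤ L) (a b : ℕ → ℝ)
    (Q : Finset ℕ) (hab : ∀ q ∈ Q, a q ≤ b q) (hord : ∀ q ∈ Q, ∀ q' ∈ Q, q < q' → b q ≤ a q') :
    ∑ q ∈ Q, (σ (b q) - σ (a q)) ≤ 2 * L := by
  have key : ∀ Q : Finset ℕ, (∀ q ∈ Q, a q ≤ b q) →
      (∀ q ∈ Q, ∀ q' ∈ Q, q < q' → b q ≤ a q') → ∀ M, (∀ q ∈ Q, b q ≤ M) →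
      ∑ q ∈ Q, (σ (b q) - σ (a q)) ≤ σ M + L := by
    intro Q
    induction Q using Finset.induction_on_max with
    | empty => intro _ _ M _; simp; linarith [abs_le.1 (hL M)]
    | insert m Q hm ih =>
      intro hab hord M hM
      rw [Finset.sum_insert (fun h => lt_irrefl _ (hm m h))]
      have := ih (fun q hq => hab q (by simp [hq]))
        (fun q hq q' hq' => hord q (by simp [hq]) q' (by simp [hq'])) (a m)
        (fun q hq => hord q (by simp [hq]) m (by simp) (hm q hq))
      have := hmono (hM m (by simp))
      linarith
  obtain ⟨M, hM⟩ := (Q.image b).exists_le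
  have := key Q hab hord M (fun q hq => hM _ (Finset.mem_image_of_mem _ hq))
  linarith [abs_le.1 (hL M)]

theorem slopes {κ : Type*} (C : Finset κ) (J : κ → Set ℝ) (hJ : ∀ c, (J c).OrdConnected)
    (σ g : κ → ℝ → ℝ) (h : ℝ → ℝ) (L : ℝ)
    (hσ : ∀ c x, |σ c x| ≤ L) (hg : ∀ c x y, g c x + σ c x * (y - x) ≤ g c y)
    (hh : ∀ c, ∀ x ∈ J c, h x = g c x) (hcov : ∀ x, ∃ c ∈ C, x ∈ J c)
    (hLip : ∀ x y, |h x - h y| ≤ L * |x - y|) (a b : ℕ → ℝ)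
    (Q : Finset ℕ) (hab : ∀ q ∈ Q, a q ≤ b q) (hord : ∀ q ∈ Q, ∀ q' ∈ Q, q < q' → b q ≤ a q') :
    ∃ s v : ℕ → ℝ, ∑ q ∈ Q, v q ≤ C.card * (3 * L) ∧ ∀ q ∈ Q, 0 ≤ v q ∧
      ∀ y ∈ Set.Icc (a q) (b q), ∀ z ∈ Set.Icc (a q) (b q),
        |h y - h z - s q * (y - z)| ≤ v q * |y - z| := by
  classical
  choose lab hlabC hlab using fun q => hcov (a q)
  have hmono : ∀ c, Monotone (σ c) := by
    intro c x y hxy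
    rcases hxy.eq_or_lt with rfl | hlt
    · exact le_rfl
    · have h1 := hg c x y
      have h2 := hg c y x
      by_contra hcon
      push Not at hcon
      nlinarith
  have hL0 : 0 ≤ L := by
    obtain ⟨c, _, _⟩ := hcov 0
    exact (abs_nonneg _).trans (hσ c 0)
  refine ⟨fun q => if b q ∈ J (lab q) then σ (lab q) (a q) else 0,
    fun q => if b q ∈ J (lab q) then σ (lab q) (b q) - σ (lab q) (a q) else L, ?_, ?_⟩
  · rw [← Finset.sum_fiberwise_of_maps_to (s := Q) (t := C) (g := lab) (fun q _ => hlabC q),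
      ← nsmul_eq_mul]
    apply Finset.sum_le_card_nsmul
    intro c hc
    rw [Finset.sum_ite]
    have h1 : ∑ q ∈ (Q.filter (fun q => lab q = c)).filter (fun q => b q ∈ J (lab q)),
        (σ (lab q) (b q) - σ (lab q) (a q)) ≤ 2 * L := by
      rw [Finset.sum_congr rfl (g := fun q => σ c (b q) - σ c (a q))]
      · apply tele (σ c) L (hmono c) (hσ c)
        · intro q hq; simp at hq; exact hab q hq.1.1
        · intro q hq q' hq'; simp at hq hq'; exact hord q hq.1.1 q' hq'.1.1
      · intro q hq
        simp at hq
        rw [hq.1.2]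
    have h2 : ((Q.filter (fun q => lab q = c)).filter (fun q => ¬ b q ∈ J (lab q))).card ≤ 1 := by
      rw [Finset.card_le_one]
      have aux : ∀ q ∈ Q, ∀ q' ∈ Q, lab q = c → lab q' = c → b q ∉ J (lab q) → ¬ q < q' := by
        intro q hq q' hq' e1 e2 hb hlt
        apply hb
        have ha' := hlab q'
        rw [e2, ← e1] at ha'
        exact (hJ (lab q)).out (hlab q) ha' ⟨hab q hq, hord q hq q' hq' hlt⟩
      intro q hq q' hq'
      simp at hq hq'
      rcases lt_trichotomy q q' with hlt | he | hlt
      · exact absurd hlt (aux q hq.1.1 q' hq'.1.1 hq.1.2 hq'.1.2 hq.2)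
      · exact he
      · exact absurd hlt (aux q' hq'.1.1 q hq.1.1 hq'.1.2 hq.1.2 hq'.2)
    rw [Finset.sum_const, nsmul_eq_mul]
    have h3 : (((Q.filter (fun q => lab q = c)).filter (fun q => ¬ b q ∈ J (lab q))).card : ℝ) ≤ 1 := by
      exact_mod_cast h2
    nlinarith
  · intro q hq
    by_cases hb : b q ∈ J (lab q)
    · simp only [hb, if_true]
      refine ⟨by linarith [hmono (lab q) (hab q hq)], ?_⟩
      intro y hy z hz
      have hyJ := (hJ (lab q)).out (hlab q) hb hy
      have hzJ := (hJ (lab q)).out (hlab q) hb hz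
      rw [hh _ y hyJ, hh _ z hzJ]
      have e1 := hg (lab q) y z
      have e2 := hg (lab q) z y
      have m1 := hmono (lab q) hy.1
      have m2 := hmono (lab q) hy.2
      have m3 := hmono (lab q) hz.1
      have m4 := hmono (lab q) hz.2
      rcases le_total y z with hyz | hyz
      · rw [abs_of_nonpos (by linarith : y - z ≤ 0), abs_le]
        constructor <;> nlinarith
      · rw [abs_of_nonneg (by linarith : 0 ≤ y - z), abs_le]
        constructor <;> nlinarith
    · simp only [hb, if_false]
      refine ⟨hL0, ?_⟩
      intro y _ z _
      simpa using hLip y z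

theorem quantize {ι : Type*} (I : Finset ι) (r : ι → ℝ) (hr : ∀ x ∈ I, 0 ≤ r x) (T : ℝ)
    (hT : 0 < T) :
    ∃ rbar : ι → ℝ, ((I.image rbar).card : ℝ) ≤ (∑ x ∈ I, r x) / T + 1 ∧
      ∀ {κ : Type} (C : Finset κ) (J : κ → Set ℝ) (_ : ∀ c, (J c).OrdConnected)
        (σ g : κ → ℝ → ℝ) (h : ℝ → ℝ) (L : ℝ)
        (_ : ∀ c x, |σ c x| ≤ L) (_ : ∀ c x y, g c x + σ c x * (y - x) ≤ g c y)
        (_ : ∀ c, ∀ x ∈ J c, h x = g c x) (_ : ∀ x, ∃ c ∈ C, x ∈ J c)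
        (_ : ∀ x y, |h x - h y| ≤ L * |x - y|),
        |∑ x ∈ I, (h (r x) - h (rbar x))| ≤ C.card * (3 * L) * (2 * T) := by
  classical
  let F : ι → ℝ := fun x => ∑ y ∈ I.filter (fun y => r y ≤ r x), r y
  let q : ι → ℕ := fun x => ⌊F x / T⌋₊
  let B : ℕ → Finset ι := fun n => I.filter (fun x => q x = n)
  let m : ℕ → ℝ := fun n => (∑ x ∈ B n, r x) / (B n).card
  let a : ℕ → ℝ := fun n => if h : (B n).Nonempty then (B n).inf' h r else 0
  let b : ℕ → ℝ := fun n => if h : (B n).Nonempty then (B n).sup' h r else 0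
  have hF0 : ∀ x, 0 ≤ F x := fun x =>
    Finset.sum_nonneg (fun y hy => hr y (Finset.mem_filter.1 hy).1)
  have hFS : ∀ x, F x ≤ ∑ x ∈ I, r x := fun x =>
    Finset.sum_le_sum_of_subset_of_nonneg (Finset.filter_subset _ _) (fun y hy _ => hr y hy)
  have hFm : ∀ x y, r x ≤ r y → F x ≤ F y := by
    intro x y hxy
    apply Finset.sum_le_sum_of_subset_of_nonneg
    · intro z hz
      simp only [Finset.mem_filter] at hz ⊢
      exact ⟨hz.1, hz.2.trans hxy⟩
    · intro z hz _
      exact hr z (Finset.mem_filter.1 hz).1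
  have hqm : ∀ x y, r x ≤ r y → q x ≤ q y := fun x y hxy =>
    Nat.floor_le_floor (div_le_div_of_nonneg_right (hFm x y hxy) hT.le)
  have hS0 : 0 ≤ ∑ x ∈ I, r x := Finset.sum_nonneg hr
  have hBI : ∀ n, ∀ x ∈ B n, x ∈ I ∧ q x = n := fun n x hx => Finset.mem_filter.1 hx
  have ha : ∀ n, (B n).Nonempty → ∃ x ∈ B n, a n = r x ∧ ∀ y ∈ B n, a n ≤ r y := by
    intro n hn
    obtain ⟨x, hx, he⟩ := Finset.exists_mem_eq_inf' hn r
    refine ⟨x, hx, by simp only [a, hn, dif_pos]; exact he, fun y hy => ?_⟩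
    simp only [a, hn, dif_pos]
    exact Finset.inf'_le r hy
  have hb : ∀ n, (B n).Nonempty → ∃ x ∈ B n, b n = r x ∧ ∀ y ∈ B n, r y ≤ b n := by
    intro n hn
    obtain ⟨x, hx, he⟩ := Finset.exists_mem_eq_sup' hn r
    refine ⟨x, hx, by simp only [b, hn, dif_pos]; exact he, fun y hy => ?_⟩
    simp only [b, hn, dif_pos]
    exact Finset.le_sup' r hy
  have hQ : ∀ n ∈ I.image q, (B n).Nonempty := by
    intro n hn
    obtain ⟨x, hx, rfl⟩ := Finset.mem_image.1 hn
    exact ⟨x, Finset.mem_filter.2 ⟨hx, rfl⟩⟩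
  have hmsum : ∀ n, (B n).Nonempty → ∑ x ∈ B n, r x = (B n).card * m n := by
    intro n hn
    have : ((B n).card : ℝ) ≠ 0 := by exact_mod_cast (Finset.card_pos.2 hn).ne'
    simp only [m]; field_simp
  have hma : ∀ n, (B n).Nonempty → a n ≤ m n ∧ m n ≤ b n := by
    intro n hn
    have hpos : (0 : ℝ) < (B n).card := by exact_mod_cast (Finset.card_pos.2 hn)
    obtain ⟨x, hx, -, h1⟩ := ha n hn
    obtain ⟨y, hy, -, h2⟩ := hb n hn
    have e1 := Finset.card_nsmul_le_sum (B n) r (a n) h1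
    have e2 := Finset.sum_le_card_nsmul (B n) r (b n) h2
    rw [nsmul_eq_mul, hmsum n hn] at e1 e2
    exact ⟨le_of_mul_le_mul_left e1 hpos, le_of_mul_le_mul_left e2 hpos⟩
  have herr : ∀ n, (B n).Nonempty → ∑ x ∈ B n, |r x - m n| ≤ 2 * T := by
    intro n hn
    obtain ⟨x0, hx0, e0, h1⟩ := ha n hn
    obtain ⟨x1, hx1, e1, h2⟩ := hb n hn
    have hr0 : 0 ≤ a n := by rw [e0]; exact hr x0 (hBI n x0 hx0).1
    have s1 : ∑ x ∈ B n, |r x - m n| ≤ ∑ x ∈ B n, ((r x - a n) + (m n - a n)) := by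
      apply Finset.sum_le_sum
      intro x hx
      rw [abs_le]
      constructor <;> linarith [h1 x hx, (hma n hn).1]
    have s2 : ∑ x ∈ B n, ((r x - a n) + (m n - a n)) = 2 * ∑ x ∈ B n, (r x - a n) := by
      rw [Finset.sum_add_distrib]
      simp only [Finset.sum_sub_distrib, Finset.sum_const, nsmul_eq_mul]
      rw [hmsum n hn]; ring
    have s3 : ∑ x ∈ B n, (r x - a n) ≤ ∑ x ∈ (B n).filter (fun x => a n < r x), r x := by
      refine (Finset.sum_le_sum ?_).trans_eq (Finset.sum_filter _ _).symm
      intro x hx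
      split_ifs with hlt
      · linarith
      · linarith
    have s4 : F x0 + ∑ x ∈ (B n).filter (fun x => a n < r x), r x ≤ F x1 := by
      simp only [F]
      rw [← Finset.sum_union]
      · apply Finset.sum_le_sum_of_subset_of_nonneg
        · intro z hz
          simp only [Finset.mem_union, Finset.mem_filter] at hz ⊢
          rcases hz with hz | hz
          · refine ⟨hz.1, hz.2.trans ?_⟩
            rw [← e0, ← e1]; exact (hma n hn).1.trans (hma n hn).2
          · refine ⟨(hBI n z hz.1).1, ?_⟩
            rw [← e1]; exact h2 z hz.1
        · intro z hz _
          exact hr z (Finset.mem_filter.1 hz).1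
      · rw [Finset.disjoint_left]
        intro z hz hz'
        simp only [Finset.mem_filter] at hz hz'
        rw [← e0] at hz
        linarith [hz.2, hz'.2]
    have q0 : (n : ℝ) ≤ F x0 / T := by
      have : q x0 = n := (hBI n x0 hx0).2
      rw [← this]
      exact Nat.floor_le (div_nonneg (hF0 _) hT.le)
    have q1 : F x1 / T < n + 1 := by
      have : q x1 = n := (hBI n x1 hx1).2
      rw [← this]
      exact Nat.lt_floor_add_one _
    rw [le_div_iff₀ hT] at q0
    rw [div_lt_iff₀ hT] at q1
    linarith
  refine ⟨fun x => m (q x), ?_, ?_⟩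
  · have hsub : I.image (fun x => m (q x)) ⊆
        (Finset.range (⌊(∑ x ∈ I, r x) / T⌋₊ + 1)).image m := by
      intro z hz
      obtain ⟨x, hx, rfl⟩ := Finset.mem_image.1 hz
      apply Finset.mem_image_of_mem
      rw [Finset.mem_range, Nat.lt_succ_iff]
      exact Nat.floor_le_floor (div_le_div_of_nonneg_right (hFS x) hT.le)
    have h1 := (Finset.card_le_card hsub).trans Finset.card_image_le
    rw [Finset.card_range] at h1
    have h2 : ((I.image (fun x => m (q x))).card : ℝ) ≤ (⌊(∑ x ∈ I, r x) / T⌋₊ : ℝ) + 1 := by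
      exact_mod_cast h1
    have h3 := Nat.floor_le (div_nonneg hS0 hT.le)
    linarith
  · intro κ C J hJ σ g h L hσ hg hh hcov hLip
    obtain ⟨s, v, hv, hsv⟩ := slopes C J hJ σ g h L hσ hg hh hcov hLip a b (I.image q)
      (fun n hn => (hma n (hQ n hn)).1.trans (hma n (hQ n hn)).2) (by
        intro n hn n' hn' hlt
        obtain ⟨x, hx, e1, -⟩ := hb n (hQ n hn)
        obtain ⟨y, hy, e2, -⟩ := ha n' (hQ n' hn')
        rw [e1, e2]
        by_contra hcon
        push Not at hcon
        have := hqm y x hcon.le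
        rw [(hBI n x hx).2, (hBI n' y hy).2] at this
        omega)
    rw [← Finset.sum_fiberwise_of_maps_to (s := I) (t := I.image q) (g := q)
      (fun x hx => Finset.mem_image_of_mem q hx)]
    have hbuck : ∀ n ∈ I.image q, |∑ x ∈ I with q x = n, (h (r x) - h (m (q x)))| ≤ v n * (2 * T) := by
      intro n hn
      have hne := hQ n hn
      obtain ⟨hv0, hs⟩ := hsv n hn
      obtain ⟨_, _, -, h1⟩ := ha n hne
      obtain ⟨_, _, -, h2⟩ := hb n hne
      have e : ∑ x ∈ I with q x = n, (h (r x) - h (m (q x))) =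
          ∑ x ∈ B n, (h (r x) - h (m n) - s n * (r x - m n)) := by
        have hz : ∑ x ∈ B n, s n * (r x - m n) = 0 := by
          rw [← Finset.mul_sum, Finset.sum_sub_distrib, hmsum n hne, Finset.sum_const,
            nsmul_eq_mul, sub_self, mul_zero]
        have hw : ∑ x ∈ B n, (h (r x) - h (m n) - s n * (r x - m n)) =
            ∑ x ∈ B n, (h (r x) - h (m n)) - ∑ x ∈ B n, s n * (r x - m n) :=
          Finset.sum_sub_distrib _ _
        rw [hw, hz, sub_zero]
        apply Finset.sum_congr rfl
        intro x hx
        rw [(hBI n x hx).2]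
      rw [e]
      refine (Finset.abs_sum_le_sum_abs _ _).trans ?_
      calc _ ≤ ∑ x ∈ B n, v n * |r x - m n| := by
            apply Finset.sum_le_sum
            intro x hx
            exact hs _ ⟨h1 x hx, h2 x hx⟩ _ (hma n hne)
        _ = v n * ∑ x ∈ B n, |r x - m n| := by rw [Finset.mul_sum]
        _ ≤ _ := mul_le_mul_of_nonneg_left (herr n hne) hv0
    refine (Finset.abs_sum_le_sum_abs _ _).trans ((Finset.sum_le_sum hbuck).trans ?_)
    rw [← Finset.sum_mul]
    exact mul_le_mul_of_nonneg_right hv (by linarith)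

/-! Geometric part -/

theorem ray_error {ι : Type*} {E : Type} [NormedAddCommGroup E] [InnerProductSpace ℝ E]
    (I : Finset ι) (r rbar : ι → ℝ) (T : ℝ)
    (hq : ∀ {κ : Type} (C : Finset κ) (J : κ → Set ℝ) (_ : ∀ c, (J c).OrdConnected)
        (σ g : κ → ℝ → ℝ) (h : ℝ → ℝ) (L : ℝ)
        (_ : ∀ c x, |σ c x| ≤ L) (_ : ∀ c x y, g c x + σ c x * (y - x) ≤ g c y)
        (_ : ∀ c, ∀ x ∈ J c, h x = g c x) (_ : ∀ x, ∃ c ∈ C, x ∈ J c)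
        (_ : ∀ x y, |h x - h y| ≤ L * |x - y|),
        |∑ x ∈ I, (h (r x) - h (rbar x))| ≤ C.card * (3 * L) * (2 * T))
    (C : Finset E) (hC : C.Nonempty) (o v : E) (hv : ‖v‖ ≤ 2) (t : ℝ) :
    |∑ x ∈ I, (max (Metric.infDist (o + r x • v) (C : Set E) - t) 0 -
        max (Metric.infDist (o + rbar x • v) (C : Set E) - t) 0)| ≤ 12 * C.card * T := by
  classical
  have hsub : ∀ (c : E) (x : ℝ), ∃ s : ℝ, |s| ≤ 2 ∧ ∀ y : ℝ,
      max (‖o + x • v - c‖ - t) 0 + s * (y - x) ≤ max (‖o + y • v - c‖ - t) 0 := by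
    intro c x
    by_cases hle : ‖o + x • v - c‖ ≤ t
    · refine ⟨0, by norm_num, fun y => ?_⟩
      rw [max_eq_right (by linarith)]; simp
    · push Not at hle
      set w := o + x • v - c with hw
      have hyw : ∀ y : ℝ, o + y • v - c = w + (y - x) • v := by
        intro y; rw [hw]; module
      rcases eq_or_ne w 0 with h0 | h0
      · refine ⟨0, by norm_num, fun y => ?_⟩
        rw [h0, norm_zero, zero_mul, add_zero]
        exact max_le_max (by linarith [norm_nonneg (o + y • v - c)]) le_rfl
      · have hwpos : 0 < ‖w‖ := norm_pos_iff.2 h0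
        refine ⟨inner ℝ w v / ‖w‖, ?_, fun y => ?_⟩
        · rw [abs_div, abs_of_pos hwpos, div_le_iff₀ hwpos]
          have := abs_real_inner_le_norm w v
          nlinarith
        · rw [max_eq_left (by linarith)]
          refine le_trans ?_ (le_max_left _ _)
          rw [hyw]
          have h1 := real_inner_le_norm w (w + (y - x) • v)
          rw [inner_add_right, real_inner_self_eq_norm_sq, inner_smul_right] at h1
          have h2 : ‖w‖ + inner ℝ w v / ‖w‖ * (y - x) ≤ ‖w + (y - x) • v‖ := by
            have : ‖w‖ * (‖w‖ + inner ℝ w v / ‖w‖ * (y - x)) =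
                ‖w‖ ^ 2 + (y - x) * inner ℝ w v := by field_simp
            exact le_of_mul_le_mul_left (by linarith) hwpos
          linarith
  choose σ hσ hg using hsub
  have hinf : ∀ z : E, ∃ c ∈ C, ∀ c' ∈ C, dist z c ≤ dist z c' := fun z =>
    Finset.exists_min_image C (fun c => dist z c) hC
  have hinfeq : ∀ z : E, ∀ c ∈ C, (∀ c' ∈ C, dist z c ≤ dist z c') →
      Metric.infDist z (C : Set E) = dist z c := by
    intro z c hc hmin
    apply le_antisymm (Metric.infDist_le_dist_of_mem (by simpa using hc))
    rw [Metric.le_infDist (by simpa using hC)]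
    intro y hy
    exact hmin y (by simpa using hy)
  let J : E → Set ℝ := fun c => {s | c ∈ C ∧ ∀ c' ∈ C, dist (o + s • v) c ≤ dist (o + s • v) c'}
  have key := hq (κ := E) C J ?_ σ (fun c x => max (‖o + x • v - c‖ - t) 0)
    (fun s => max (Metric.infDist (o + s • v) (C : Set E) - t) 0) 2 hσ hg ?_ ?_ ?_
  · refine key.trans (le_of_eq ?_); ring
  · intro c
    constructor
    intro x hx y hy z hz
    refine ⟨hx.1, fun c' hc' => ?_⟩
    have h1 := hx.2 c' hc'
    have h2 := hy.2 c' hc'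
    have hexp : ∀ s : ℝ, ∀ c : E, dist (o + s • v) c ^ 2 =
        ‖o + s • v‖ ^ 2 - 2 * (inner ℝ o c + s * inner ℝ v c) + ‖c‖ ^ 2 := by
      intro s c
      rw [dist_eq_norm, norm_sub_sq_real, inner_add_left, real_inner_smul_left]
    have h1' := pow_le_pow_left₀ dist_nonneg h1 2
    have h2' := pow_le_pow_left₀ dist_nonneg h2 2
    rw [hexp, hexp] at h1' h2'
    apply le_of_sq_le_sq _ dist_nonneg
    rw [hexp, hexp]
    obtain ⟨z1, z2⟩ := hz
    rcases le_total (inner ℝ v c) (inner ℝ v c') with hi | hi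
    · nlinarith
    · nlinarith
  · intro c x hx
    rw [hinfeq _ c hx.1 hx.2, dist_eq_norm]
  · intro s
    obtain ⟨c, hc, hm⟩ := hinf (o + s • v)
    exact ⟨c, hc, hc, hm⟩
  · intro x y
    have h1 : |Metric.infDist (o + x • v) (C : Set E) - Metric.infDist (o + y • v) (C : Set E)| ≤
        dist (o + x • v) (o + y • v) := by
      have := (Metric.lipschitz_infDist_pt (C : Set E)).dist_le_mul (o + x • v) (o + y • v)
      simpa [Real.dist_eq] using this
    have h2 : dist (o + x • v) (o + y • v) ≤ 2 * |x - y| := by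
      rw [dist_eq_norm, add_sub_add_left_eq_sub, ← sub_smul, norm_smul, Real.norm_eq_abs]
      nlinarith [abs_nonneg (x - y)]
    refine (abs_max_sub_max_le_abs _ _ _).trans ?_
    rw [sub_sub_sub_cancel_right]
    exact h1.trans h2

theorem exists_net (d : ℕ) (hd : 1 ≤ d) (ε : ℝ) (hε : 0 < ε) (hε1 : ε ≤ 1) :
    ∃ (ρ : EuclideanSpace ℝ (Fin d) → EuclideanSpace ℝ (Fin d))
      (N : Finset (EuclideanSpace ℝ (Fin d))), (N.card : ℝ) ≤ ((2 * d + 5) / ε) ^ d ∧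
      ∀ u, ‖u‖ ≤ 1 → ρ u ∈ N ∧ ‖u - ρ u‖ ≤ ε := by
  classical
  have hd0 : (0 : ℝ) < d := by exact_mod_cast hd
  let δ : ℝ := ε / d
  have hδ : 0 < δ := div_pos hε hd0
  let M : ℕ := ⌈(1 : ℝ) / δ⌉₊ + 1
  let G : Finset (Fin d → ℤ) := Fintype.piFinset (fun _ => Finset.Icc (-(M : ℤ)) M)
  let emb : (Fin d → ℤ) → EuclideanSpace ℝ (Fin d) := fun z => WithLp.toLp 2 (fun i => δ * z i)
  refine ⟨fun u => emb (fun i => ⌊u i / δ⌋), G.image emb, ?_, ?_⟩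
  · have h1 : (G.image emb).card ≤ (2 * M + 1) ^ d := by
      refine Finset.card_image_le.trans (le_of_eq ?_)
      simp only [G, Fintype.card_piFinset, Int.card_Icc, Finset.prod_const, Finset.card_univ,
        Fintype.card_fin]
      congr 1
      omega
    have h2 : ((G.image emb).card : ℝ) ≤ (2 * M + 1) ^ d := by exact_mod_cast h1
    refine h2.trans (pow_le_pow_left₀ (by positivity) ?_ d)
    have h3 : (⌈(1 : ℝ) / δ⌉₊ : ℝ) < 1 / δ + 1 := Nat.ceil_lt_add_one (by positivity)
    have h4 : (M : ℝ) ≤ 1 / δ + 2 := by simp only [M]; push_cast; linarith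
    have h5 : 1 / δ = d / ε := by simp only [δ]; field_simp
    rw [h5] at h4
    have h6 : 1 ≤ 1 / ε := by rw [le_div_iff₀ hε]; linarith
    have h7 : (2 * (d : ℝ) + 5) / ε = 2 * (d / ε) + 5 * (1 / ε) := by ring
    rw [h7]; linarith
  · intro u hu
    have hcoord : ∀ i, |u i| ≤ 1 := fun i => by
      have := PiLp.norm_apply_le u i
      rw [Real.norm_eq_abs] at this
      exact this.trans hu
    constructor
    · apply Finset.mem_image_of_mem
      simp only [G, Fintype.mem_piFinset, Finset.mem_Icc]
      intro i
      have hc := Nat.le_ceil ((1 : ℝ) / δ)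
      have hi := abs_le.1 (hcoord i)
      have l1 : u i / δ ≤ 1 / δ := div_le_div_of_nonneg_right hi.2 hδ.le
      have l2 : -(1 / δ) ≤ u i / δ := by rw [← neg_div]; exact div_le_div_of_nonneg_right hi.1 hδ.le
      constructor
      · rw [Int.le_floor]
        simp only [M]; push_cast; linarith
      · apply Int.le_of_lt_add_one
        rw [Int.floor_lt]
        simp only [M]; push_cast; linarith
    · set w := u - emb (fun i => ⌊u i / δ⌋) with hw
      have hwi : ∀ i, |w i| ≤ δ := by
        intro i
        have e : w i = u i - δ * ⌊u i / δ⌋ := by simp [hw, emb]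
        have f1 := Int.floor_le (u i / δ)
        have f2 := Int.lt_floor_add_one (u i / δ)
        rw [le_div_iff₀ hδ] at f1
        rw [div_lt_iff₀ hδ] at f2
        rw [e, abs_le]
        constructor <;> nlinarith
      rw [EuclideanSpace.norm_eq]
      apply Real.sqrt_le_iff.2 ⟨hε.le, ?_⟩
      calc ∑ i, ‖w i‖ ^ 2 ≤ ∑ i : Fin d, δ ^ 2 := by
            apply Finset.sum_le_sum
            intro i _
            exact pow_le_pow_left₀ (norm_nonneg _) (by rw [Real.norm_eq_abs]; exact hwi i) 2
        _ = d * δ ^ 2 := by simp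
        _ ≤ ε ^ 2 := by
            have : (d : ℝ) * δ ^ 2 = ε ^ 2 / d := by simp only [δ]; field_simp
            rw [this]
            exact div_le_self (by positivity) (by exact_mod_cast hd)

theorem exists_near {E : Type*} [PseudoMetricSpace E] (C : Finset E) (hC : C.Nonempty) (z : E) :
    ∃ c ∈ C, Metric.infDist z (C : Set E) = dist z c := by
  obtain ⟨c, hc, hmin⟩ := Finset.exists_min_image C (fun c => dist z c) hC
  refine ⟨c, hc, le_antisymm (Metric.infDist_le_dist_of_mem (by simpa using hc)) ?_⟩
  rw [Metric.le_infDist (by simpa using hC)]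
  intro y hy
  exact hmin y (by simpa using hy)

theorem exists_centers (d k : ℕ) (hk : 1 ≤ k) (X : Finset (EuclideanSpace ℝ (Fin d))) (p : ℕ)
    (hp : 1 ≤ p) (hpX : p ≤ X.card) :
    ∃ Cs : Finset (EuclideanSpace ℝ (Fin d)), Cs.Nonempty ∧ Cs.card ≤ k ∧
      ∀ C : Finset (EuclideanSpace ℝ (Fin d)), C.card = k → C.Nonempty →
        costP d p X.val Cs ≤ 2 * costP d p X.val C := by
  classical
  have hX : X.Nonempty := Finset.card_pos.1 (by omega)
  obtain ⟨x0, hx0⟩ := hX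
  let P := X.powerset.filter (fun C => C.Nonempty ∧ C.card ≤ k)
  have hP : P.Nonempty := ⟨{x0}, by simp [P, hx0, hk]⟩
  obtain ⟨Cs, hCs, hmin⟩ := Finset.exists_min_image P (fun C => costP d p X.val C) hP
  simp only [P, Finset.mem_filter, Finset.mem_powerset] at hCs hmin
  refine ⟨Cs, hCs.2.1, hCs.2.2, ?_⟩
  intro C hCk hC
  choose nr hnrX hnr using fun c => Finset.exists_min_image X (fun x => dist x c) ⟨x0, hx0⟩
  have hC' := hmin (C.image nr) ⟨by
    intro y hy
    obtain ⟨c, _, rfl⟩ := Finset.mem_image.1 hy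
    exact hnrX c, hC.image _, Finset.card_image_le.trans hCk.le⟩
  refine hC'.trans ?_
  have := topP_le_of_subset X
    (fun x => Metric.infDist x ((C.image nr : Finset _) : Set (EuclideanSpace ℝ (Fin d))))
    (fun x => Metric.infDist x (C : Set (EuclideanSpace ℝ (Fin d)))) p hp hpX 2 0 ?_ (by norm_num)
  · simpa [costP] using this
  · intro S hS _
    rw [Finset.mul_sum, add_zero]
    apply Finset.sum_le_sum
    intro x hx
    obtain ⟨c, hc, he⟩ := exists_near C hC x
    rw [he]
    have h1 : Metric.infDist x ((C.image nr : Finset _) : Set (EuclideanSpace ℝ (Fin d))) ≤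
        dist x (nr c) :=
      Metric.infDist_le_dist_of_mem (Finset.mem_coe.2 (Finset.mem_image_of_mem nr hc))
    have h2 := hnr c x (hS hx)
    have h3 := dist_triangle_right x (nr c) c
    linarith

theorem core (d : ℕ) (hd : 1 ≤ d) (k : ℕ) (hk : 1 ≤ k) (ε : ℝ) (hε : 0 < ε) (hε1 : ε ≤ 1)
    (X : Finset (EuclideanSpace ℝ (Fin d))) (p : ℕ) (hp : 1 ≤ p) (hpX : p ≤ X.card)
    (Cs : Finset (EuclideanSpace ℝ (Fin d))) (hCs : Cs.Nonempty) (hCk : Cs.card ≤ k) :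
    ∃ π : EuclideanSpace ℝ (Fin d) → EuclideanSpace ℝ (Fin d),
      ((X.image π).card : ℝ) ≤ 3 * k ^ 2 * ((2 * d + 5) / ε) ^ d / ε ∧
      ∀ C : Finset (EuclideanSpace ℝ (Fin d)), C.card = k → C.Nonempty →
        costP d p (X.val.map π) C ≤ costP d p X.val C + 14 * ε * costP d p X.val Cs ∧
        costP d p X.val C ≤ costP d p (X.val.map π) C + 14 * ε * costP d p X.val Cs := by
  classical
  set R := costP d p X.val Cs with hR
  choose nr hnrC hnr using fun z => exists_near Cs hCs z
  let r : EuclideanSpace ℝ (Fin d) → ℝ := fun x =>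
    Metric.infDist x (Cs : Set (EuclideanSpace ℝ (Fin d)))
  have hr0 : ∀ x, 0 ≤ r x := fun x => Metric.infDist_nonneg
  have hrn : ∀ x, ‖x - nr x‖ = r x := fun x => by rw [← dist_eq_norm]; exact (hnr x).symm
  obtain ⟨O, hOX, hOc, hOR, θ, hθ1, hθ2⟩ := topP_exists X r p hp hpX
  have hRO : R = ∑ x ∈ O, r x := hOR
  have hR0 : 0 ≤ R := by rw [hRO]; exact Finset.sum_nonneg (fun x _ => hr0 x)
  have hp0 : (0 : ℝ) < p := by exact_mod_cast hp
  have hk1 : (1 : ℝ) ≤ k := by exact_mod_cast hk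
  have hθR : p * θ ≤ R := by
    have := Finset.card_nsmul_le_sum O r θ hθ1
    rwa [hOc, nsmul_eq_mul, ← hRO] at this
  rcases hR0.eq_or_lt with hRz | hRpos
  · -- degenerate case
    refine ⟨id, ?_, ?_⟩
    · have hrz : ∀ x ∈ X, r x = 0 := by
        intro x hx
        by_cases hxO : x ∈ O
        · exact (Finset.sum_eq_zero_iff_of_nonneg (fun x _ => hr0 x)).1 (hRO.symm.trans hRz.symm) x hxO
        · have := hθ2 x hx hxO
          have : θ ≤ 0 := by rw [← hRz] at hθR; nlinarith
          linarith [hr0 x]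
      have hsub : X ⊆ Cs := by
        intro x hx
        have := hrn x
        rw [hrz x hx, norm_eq_zero, sub_eq_zero] at this
        rw [this]; exact hnrC x
      rw [Finset.image_id]
      have h1 : (X.card : ℝ) ≤ k := by exact_mod_cast (Finset.card_le_card hsub).trans hCk
      have h2 : 1 ≤ ((2 * (d : ℝ) + 5) / ε) ^ d := by
        apply one_le_pow₀
        rw [le_div_iff₀ hε]
        have : (0 : ℝ) ≤ d := by positivity
        linarith
      rw [le_div_iff₀ hε]
      calc (X.card : ℝ) * ε ≤ k * 1 := by gcongr
        _ ≤ 3 * k ^ 2 * 1 := by nlinarith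
        _ ≤ _ := by gcongr
    · intro C _ _
      rw [← hRz]; simp
  · -- main case
    obtain ⟨ρ, N, hN, hρ⟩ := exists_net d hd ε hε hε1
    have hscale : ∀ (w : EuclideanSpace ℝ (Fin d)) (s : ℝ), ‖w‖ ≤ s →
        ρ (s⁻¹ • w) ∈ N ∧ ‖w - s • ρ (s⁻¹ • w)‖ ≤ ε * s ∧ ‖ρ (s⁻¹ • w)‖ ≤ 2 := by
      intro w s hws
      have hs0 : 0 ≤ s := (norm_nonneg _).trans hws
      have hu : ‖s⁻¹ • w‖ ≤ 1 := by
        rw [norm_smul, norm_inv, Real.norm_eq_abs, abs_of_nonneg hs0]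
        calc s⁻¹ * ‖w‖ ≤ s⁻¹ * s := mul_le_mul_of_nonneg_left hws (inv_nonneg.2 hs0)
          _ ≤ 1 := inv_mul_le_one
      obtain ⟨h1, h2⟩ := hρ _ hu
      refine ⟨h1, ?_, ?_⟩
      · rcases hs0.eq_or_lt with h0 | hpos
        · rw [← h0] at hws ⊢
          have : w = 0 := norm_le_zero_iff.1 hws
          simp [this]
        · have : w - s • ρ (s⁻¹ • w) = s • (s⁻¹ • w - ρ (s⁻¹ • w)) := by
            rw [smul_sub, smul_inv_smul₀ hpos.ne']
          rw [this, norm_smul, Real.norm_eq_abs, abs_of_pos hpos, mul_comm]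
          gcongr
      · have := norm_sub_norm_le (ρ (s⁻¹ • w)) (s⁻¹ • w)
        rw [norm_sub_rev] at this
        linarith
    have hNne : 0 < N.card := Finset.card_pos.2 ⟨_, (hscale 0 0 (by simp)).1⟩
    have hN1 : (0 : ℝ) < N.card := by exact_mod_cast hNne
    have hk0 : (0 : ℝ) < k := by linarith
    let m : ℝ := k * N.card
    have hm : 0 < m := mul_pos hk0 hN1
    let T : ℝ := ε * R / (m * k)
    have hT : 0 < T := by positivity
    let s : ℝ := R / p
    have hs0 : 0 ≤ s := by positivity
    let v : EuclideanSpace ℝ (Fin d) → EuclideanSpace ℝ (Fin d) := fun x =>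
      ρ ((r x)⁻¹ • (x - nr x))
    let j : EuclideanSpace ℝ (Fin d) → EuclideanSpace ℝ (Fin d) × EuclideanSpace ℝ (Fin d) :=
      fun x => (nr x, v x)
    let I := fun jj => O.filter (fun x => j x = jj)
    choose rb hrbc hrb using fun jj => quantize (I jj) r (fun x _ => hr0 x) T hT
    let inn : EuclideanSpace ℝ (Fin d) → EuclideanSpace ℝ (Fin d) := fun x =>
      nr x + s • ρ (s⁻¹ • (x - nr x))
    let x1 : EuclideanSpace ℝ (Fin d) → EuclideanSpace ℝ (Fin d) := fun x =>
      if x ∈ O then nr x + r x • v x else inn x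
    let π : EuclideanSpace ℝ (Fin d) → EuclideanSpace ℝ (Fin d) := fun x =>
      if x ∈ O then nr x + rb (j x) x • v x else inn x
    have hin : ∀ x ∈ X, x ∉ O → ‖x - nr x‖ ≤ s := by
      intro x hx hxO
      rw [hrn]
      refine (hθ2 x hx hxO).trans ?_
      rw [le_div_iff₀ hp0]; linarith
    have hjN : ∀ x, j x ∈ Cs ×ˢ N := fun x =>
      Finset.mem_product.2 ⟨hnrC x, (hscale _ _ (hrn x).le).1⟩
    have hJc : ((O.image j).card : ℝ) ≤ m := by
      have h1 : O.image j ⊆ Cs ×ˢ N := by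
        intro y hy
        obtain ⟨x, _, rfl⟩ := Finset.mem_image.1 hy
        exact hjN x
      have h2 := Finset.card_le_card h1
      rw [Finset.card_product] at h2
      have h3 : ((O.image j).card : ℝ) ≤ Cs.card * N.card := by exact_mod_cast h2
      refine h3.trans ?_
      have : (Cs.card : ℝ) ≤ k := by exact_mod_cast hCk
      simp only [m]; gcongr
    refine ⟨π, ?_, ?_⟩
    · let A1 := (Cs ×ˢ N).image (fun y => y.1 + s • y.2)
      let A2 := (O.image j).biUnion
        (fun jj => ((I jj).image (rb jj)).image (fun z => jj.1 + z • jj.2))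
      have hsub : X.image π ⊆ A1 ∪ A2 := by
        intro y hy
        obtain ⟨x, hx, rfl⟩ := Finset.mem_image.1 hy
        rw [Finset.mem_union]
        by_cases hxO : x ∈ O
        · right
          simp only [A2, Finset.mem_biUnion]
          refine ⟨j x, Finset.mem_image_of_mem _ hxO, ?_⟩
          rw [Finset.mem_image]
          refine ⟨rb (j x) x, Finset.mem_image_of_mem _ (Finset.mem_filter.2 ⟨hxO, rfl⟩), ?_⟩
          simp only [π, hxO, if_true, j]
        · left
          rw [Finset.mem_image]
          refine ⟨(nr x, ρ (s⁻¹ • (x - nr x))), Finset.mem_product.2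
            ⟨hnrC x, (hscale _ _ (hin x hx hxO)).1⟩, ?_⟩
          simp only [π, hxO, if_false, inn]
      have c0 : ((X.image π).card : ℝ) ≤ A1.card + A2.card := by
        exact_mod_cast (Finset.card_le_card hsub).trans (Finset.card_union_le _ _)
      have c1 : (A1.card : ℝ) ≤ m := by
        have h2 : A1.card ≤ (Cs ×ˢ N).card := Finset.card_image_le
        rw [Finset.card_product] at h2
        have h3 : (A1.card : ℝ) ≤ Cs.card * N.card := by exact_mod_cast h2
        refine h3.trans ?_
        have : (Cs.card : ℝ) ≤ k := by exact_mod_cast hCk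
        simp only [m]; gcongr
      have c2 : (A2.card : ℝ) ≤ R / T + m := by
        have h1 : A2.card ≤ ∑ jj ∈ O.image j, ((I jj).image (rb jj)).card :=
          Finset.card_biUnion_le.trans (Finset.sum_le_sum (fun _ _ => Finset.card_image_le))
        have h2 : (A2.card : ℝ) ≤ ∑ jj ∈ O.image j, (((I jj).image (rb jj)).card : ℝ) := by
          exact_mod_cast h1
        have h3 : ∑ jj ∈ O.image j, (((I jj).image (rb jj)).card : ℝ) ≤
            ∑ jj ∈ O.image j, ((∑ x ∈ I jj, r x) / T + 1) := by
          apply Finset.sum_le_sum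
          intro jj _
          convert hrbc jj
        have h4 : ∑ jj ∈ O.image j, ∑ x ∈ I jj, r x = R := by
          rw [hRO]
          exact Finset.sum_fiberwise_of_maps_to (fun x hx => Finset.mem_image_of_mem j hx) r
        rw [Finset.sum_add_distrib, ← Finset.sum_div, h4, Finset.sum_const, nsmul_eq_mul,
          mul_one] at h3
        linarith
      have c3 : R / T = m * k / ε := by
        simp only [T]; field_simp
      have c4 : m ≤ m * k / ε := by
        rw [le_div_iff₀ hε]
        have : m * ε ≤ m * 1 := by gcongr
        nlinarith
      calc ((X.image π).card : ℝ) ≤ 3 * (m * k / ε) := by linarith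
        _ = 3 * k ^ 2 * N.card / ε := by simp only [m]; ring
        _ ≤ _ := by gcongr
    · intro C hCk' hC
      let f : EuclideanSpace ℝ (Fin d) → ℝ := fun x =>
        Metric.infDist x (C : Set (EuclideanSpace ℝ (Fin d)))
      let e : EuclideanSpace ℝ (Fin d) → ℝ := fun x => (if x ∈ O then ε * r x else 0) + ε * s
      have hfe : ∀ x ∈ X, |f x - f (x1 x)| ≤ e x := by
        intro x hx
        have h1 : |f x - f (x1 x)| ≤ ‖x - x1 x‖ := by
          have := (Metric.lipschitz_infDist_pt (C : Set (EuclideanSpace ℝ (Fin d)))).dist_le_mul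
            x (x1 x)
          rw [← dist_eq_norm]
          simpa [Real.dist_eq] using this
        refine h1.trans ?_
        have hes : 0 ≤ ε * s := by positivity
        by_cases hxO : x ∈ O
        · simp only [x1, e, hxO, if_true, v]
          rw [← sub_sub]
          linarith [(hscale _ _ (hrn x).le).2.1]
        · simp only [x1, e, hxO, if_false, inn]
          rw [← sub_sub]
          linarith [(hscale _ _ (hin x hx hxO)).2.1]
      have he : ∀ S ⊆ X, S.card = p → ∑ x ∈ S, e x ≤ 2 * ε * R := by
        intro S hS hSc
        simp only [e]
        rw [Finset.sum_add_distrib, Finset.sum_const, hSc, nsmul_eq_mul]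
        have h1 : ∑ x ∈ S, (if x ∈ O then ε * r x else 0) ≤ ∑ x ∈ X, (if x ∈ O then ε * r x else 0) := by
          apply Finset.sum_le_sum_of_subset_of_nonneg hS
          intro x _ _
          split_ifs
          · exact mul_nonneg hε.le (hr0 x)
          · exact le_rfl
        have h2 : ∑ x ∈ X, (if x ∈ O then ε * r x else 0) = ε * R := by
          rw [Finset.sum_ite_mem, Finset.inter_eq_right.2 hOX, hRO, Finset.mul_sum]
        have h3 : (p : ℝ) * (ε * s) = ε * R := by simp only [s]; field_simp
        linarith
      have hstep : ∀ t, |∑ x ∈ X, (max (f (x1 x) - t) 0 - max (f (π x) - t) 0)| ≤ 12 * ε * R := by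
        intro t
        have h1 : ∑ x ∈ X, (max (f (x1 x) - t) 0 - max (f (π x) - t) 0) =
            ∑ x ∈ O, (max (f (x1 x) - t) 0 - max (f (π x) - t) 0) := by
          symm
          apply Finset.sum_subset hOX
          intro x _ hxO
          simp only [x1, π, hxO, if_false, sub_self]
        rw [h1, ← Finset.sum_fiberwise_of_maps_to (t := O.image j)
          (fun x hx => Finset.mem_image_of_mem j hx)]
        refine (Finset.abs_sum_le_sum_abs _ _).trans ?_
        have h2 : ∀ jj ∈ O.image j, |∑ x ∈ O with j x = jj,
            (max (f (x1 x) - t) 0 - max (f (π x) - t) 0)| ≤ 12 * k * T := by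
          intro jj hjj
          obtain ⟨y, hy, rfl⟩ := Finset.mem_image.1 hjj
          have h3 := ray_error (I (j y)) r (rb (j y)) T (hrb (j y)) C hC (nr y) (v y)
            (hscale _ _ (hrn y).le).2.2 t
          rw [hCk'] at h3
          refine le_of_eq_of_le ?_ h3
          congr 1
          apply Finset.sum_congr rfl
          intro x hx
          obtain ⟨hxO, hxj⟩ := Finset.mem_filter.1 hx
          have hj1 : nr x = nr y := congrArg Prod.fst hxj
          have hj2 : v x = v y := congrArg Prod.snd hxj
          simp only [x1, π, hxO, if_true, f]
          rw [hxj, hj1, hj2]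
        refine (Finset.sum_le_card_nsmul _ _ _ h2).trans ?_
        rw [nsmul_eq_mul]
        calc ((O.image j).card : ℝ) * (12 * k * T) ≤ m * (12 * k * T) := by gcongr
          _ = 12 * ε * R := by simp only [T]; field_simp
      have g1 : topP p (X.val.map f) ≤ 1 * topP p (X.val.map (fun x => f (x1 x))) + 2 * ε * R := by
        apply topP_le_of_subset X f _ p hp hpX 1 _ _ zero_le_one
        intro S hS hSc
        have h1 := he S hS hSc
        have h2 : ∑ x ∈ S, f x ≤ ∑ x ∈ S, (f (x1 x) + e x) := Finset.sum_le_sum (fun x hx => by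
          linarith [(abs_le.1 (hfe x (hS hx))).2])
        rw [Finset.sum_add_distrib] at h2
        linarith
      have g2 : topP p (X.val.map (fun x => f (x1 x))) ≤ 1 * topP p (X.val.map f) + 2 * ε * R := by
        apply topP_le_of_subset X _ f p hp hpX 1 _ _ zero_le_one
        intro S hS hSc
        have h1 := he S hS hSc
        have h2 : ∑ x ∈ S, f (x1 x) ≤ ∑ x ∈ S, (f x + e x) := Finset.sum_le_sum (fun x hx => by
          linarith [(abs_le.1 (hfe x (hS hx))).1])
        rw [Finset.sum_add_distrib] at h2
        linarith
      have g3 : topP p (X.val.map (fun x => f (x1 x))) ≤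
          topP p (X.val.map (fun x => f (π x))) + 12 * ε * R := by
        apply topP_le_of_var X _ _ p hp hpX
        intro t
        have := (abs_le.1 (hstep t)).2
        rw [Finset.sum_sub_distrib] at this
        linarith
      have g4 : topP p (X.val.map (fun x => f (π x))) ≤
          topP p (X.val.map (fun x => f (x1 x))) + 12 * ε * R := by
        apply topP_le_of_var X _ _ p hp hpX
        intro t
        have := (abs_le.1 (hstep t)).1
        rw [Finset.sum_sub_distrib] at this
        linarith
      have hD : costP d p (X.val.map π) C = topP p (X.val.map (fun x => f (π x))) := by
        unfold costP
        rw [Multiset.map_map]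
        rfl
      have hX' : costP d p X.val C = topP p (X.val.map f) := rfl
      rw [hD, hX']
      constructor <;> linarith

theorem stmt_12 (d : ℕ) (hd : 1 ≤ d) :
    ∃ K : ℝ, 0 < K ∧
      ∀ k : ℕ, 1 ≤ k →
      ∀ ε : ℝ, ε ∈ Set.Ioo (0 : ℝ) 1 →
      ∀ X : Finset (EuclideanSpace ℝ (Fin d)),
      ∀ p : ℕ, 1 ≤ p → p ≤ X.card →
      ∃ D : Multiset (EuclideanSpace ℝ (Fin d)),
        (D.toFinset.card : ℝ) ≤ K * k ^ 2 / ε ^ (d + 1) ∧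
        ∀ C : Finset (EuclideanSpace ℝ (Fin d)), C.card = k → C.Nonempty →
          costP d p D C ∈
            Set.Icc ((1 - ε) * costP d p X.val C) ((1 + ε) * costP d p X.val C) := by
  refine ⟨3 * ((2 * d + 5) * 28) ^ d * 28, by positivity, ?_⟩
  intro k hk ε hε X p hp hpX
  obtain ⟨hε0, hε1⟩ := hε
  obtain ⟨Cs, hCs, hCk, hopt⟩ := exists_centers d k hk X p hp hpX
  obtain ⟨π, hcard, hcost⟩ := core d hd k hk (ε / 28) (by positivity) (by linarith) X p hp hpX
    Cs hCs hCk
  refine ⟨X.val.map π, ?_, ?_⟩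
  · have h1 : (X.val.map π).toFinset = X.image π := by
      ext y; simp
    rw [h1]
    have h2 : 3 * (k : ℝ) ^ 2 * ((2 * d + 5) / (ε / 28)) ^ d / (ε / 28) =
        3 * ((2 * d + 5) * 28) ^ d * 28 * k ^ 2 / ε ^ (d + 1) := by
      rw [show (2 * (d : ℝ) + 5) / (ε / 28) = ((2 * d + 5) * 28) / ε by field_simp, div_pow]
      field_simp
      ring
    rw [← h2]
    convert hcard
  · intro C hC hCne
    obtain ⟨h1, h2⟩ := hcost C hC hCne
    have h3 := mul_le_mul_of_nonneg_left (hopt C hC hCne) hε0.le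
    constructor <;> linarith
end

section
/- For every d ∈ ℤ₊ there is a constant K_d > 0 such that the following holds. Given k ∈ ℤ₊, ε ∈ (0,1), and a finite set X ⊂ ℝ^d of n ≥ 2 points, there exists a finite multiset D of points in ℝ^d (points with positive integer multiplicities) whose number of distinct points is at most K_d·k²·(log n)²/ε^{d+1}, such that for every set C ⊂ ℝ^d of k centers and every nonincreasing weight vector v ∈ ℝ₊^n: cost_v(D,C) ∈ [(1−ε)·cost_v(X,C), (1+ε)·cost_v(X,C)]. -/
attribute [local instance] Classical.decEq

/-- The list of distances from the points of the multiset `s` (with multiplicity) to the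
nearest center of `C`, sorted in nonincreasing order. -/
noncomputable def sortedDistsDesc (d : ℕ) (s : Multiset (EuclideanSpace ℝ (Fin d)))
    (C : Finset (EuclideanSpace ℝ (Fin d))) : List ℝ :=
  ((s.map fun x => Metric.infDist x (C : Set (EuclideanSpace ℝ (Fin d)))).sort (· ≤ ·)).reverse

/-- The Ordered k-Median objective for a weight vector `v ∈ ℝ^n` applied to a multiset of
total multiplicity `n`: the `i`-th weight multiplies the `i`-th largest distance. -/
noncomputable def costV (d n : ℕ) (v : Fin n → ℝ) (s : Multiset (EuclideanSpace ℝ (Fin d)))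
    (C : Finset (EuclideanSpace ℝ (Fin d))) : ℝ :=
  ∑ i : Fin n, v i * (sortedDistsDesc d s C).getD i 0

/-- Generic sorted value list. -/
noncomputable def svals {E : Type*} (X : Finset E) (f : E → ℝ) : List ℝ :=
  ((X.val.map f).sort (· ≤ ·)).reverse

noncomputable def sv {E : Type*} (X : Finset E) (f : E → ℝ) (i : ℕ) : ℝ := (svals X f).getD i 0

/-- Sum of the `p` largest values. -/
noncomputable def topS {E : Type*} (X : Finset E) (f : E → ℝ) (p : ℕ) : ℝ :=
  ∑ i ∈ Finset.range p, sv X f i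

lemma svals_length {E : Type*} (X : Finset E) (f : E → ℝ) : (svals X f).length = X.card := by
  simp [svals]

lemma svals_coe {E : Type*} (X : Finset E) (f : E → ℝ) :
    (svals X f : Multiset ℝ) = X.val.map f := by
  unfold svals
  rw [Multiset.coe_reverse, Multiset.sort_eq]

lemma sv_nonneg {E : Type*} (X : Finset E) (f : E → ℝ) (hf : ∀ x, 0 ≤ f x) (i : ℕ) :
    0 ≤ sv X f i := by
  unfold sv
  by_cases h : i < (svals X f).length
  · rw [List.getD_eq_getElem _ _ h]
    have h1 : (svals X f)[i] ∈ (svals X f : Multiset ℝ) := by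
      simp
    rw [svals_coe, Multiset.mem_map] at h1
    obtain ⟨x, -, hx⟩ := h1
    rw [← hx]; exact hf x
  · rw [List.getD_eq_default _ _ (not_lt.mp h)]

lemma sv_anti {E : Type*} (X : Finset E) (f : E → ℝ) (hf : ∀ x, 0 ≤ f x) :
    Antitone (sv X f) := by
  intro i j hij
  by_cases h : j < (svals X f).length
  · unfold sv
    rw [List.getD_eq_getElem _ _ h, List.getD_eq_getElem _ _ (lt_of_le_of_lt hij h)]
    rcases hij.eq_or_lt with rfl | hlt
    · exact le_rfl
    have hs : (svals X f).Pairwise (fun a b => b ≤ a) := by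
      unfold svals
      rw [List.pairwise_reverse]
      exact Multiset.pairwise_sort _ _
    exact List.pairwise_iff_getElem.mp hs i j _ _ hlt
  · have : sv X f j = 0 := by
      unfold sv
      rw [List.getD_eq_default _ _ (not_lt.mp h)]
    rw [this]
    exact sv_nonneg X f hf i

lemma sum_sv {E : Type*} (X : Finset E) (f : E → ℝ) (φ : ℝ → ℝ) :
    ∑ i ∈ Finset.range X.card, φ (sv X f i) = ∑ x ∈ X, φ (f x) := by
  have h1 : ∑ x ∈ X, φ (f x) = (((svals X f : Multiset ℝ)).map φ).sum := by
    rw [svals_coe, Multiset.map_map]; rfl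
  rw [h1, Multiset.map_coe, Multiset.sum_coe, ← svals_length X f, Finset.sum_range,
    ← Fin.sum_univ_getElem]
  refine Finset.sum_equiv (finCongr (by simp)) (by simp) ?_
  intro i _
  simp [sv]

lemma topS_le {E : Type*} (X : Finset E) (f : E → ℝ) (p : ℕ) (hp : p ≤ X.card) (t : ℝ) :
    topS X f p ≤ p * t + ∑ x ∈ X, max (f x - t) 0 := by
  rw [← sum_sv X f (fun y => max (y - t) 0)]
  have h1 : ∑ i ∈ Finset.range p, max (sv X f i - t) 0 ≤
      ∑ i ∈ Finset.range X.card, max (sv X f i - t) 0 :=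
    Finset.sum_le_sum_of_subset_of_nonneg (Finset.range_mono hp)
      (fun _ _ _ => le_max_right _ _)
  have h2 : topS X f p ≤ ∑ i ∈ Finset.range p, (t + max (sv X f i - t) 0) := by
    refine Finset.sum_le_sum fun i _ => ?_
    linarith [le_max_left (sv X f i - t) 0]
  rw [Finset.sum_add_distrib] at h2
  simp at h2
  linarith

lemma topS_eq {E : Type*} (X : Finset E) (f : E → ℝ) (hf : ∀ x, 0 ≤ f x) (p : ℕ)
    (hp : p ≤ X.card) :
    ∃ t, topS X f p = p * t + ∑ x ∈ X, max (f x - t) 0 := by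
  refine ⟨sv X f p, ?_⟩
  rw [← sum_sv X f (fun y => max (y - sv X f p) 0)]
  have h1 : ∑ i ∈ Finset.range p, max (sv X f i - sv X f p) 0 =
      ∑ i ∈ Finset.range X.card, max (sv X f i - sv X f p) 0 := by
    refine Finset.sum_subset (Finset.range_mono hp) ?_
    intro i _ hi
    have : p ≤ i := by simpa using hi
    exact max_eq_right (by linarith [sv_anti X f hf this])
  rw [← h1]
  have h2 : topS X f p = ∑ i ∈ Finset.range p, (sv X f p + max (sv X f i - sv X f p) 0) := by
    refine Finset.sum_congr rfl fun i hi => ?_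
    have : i ≤ p := (Finset.mem_range.mp hi).le
    rw [max_eq_left (by linarith [sv_anti X f hf this])]
    ring
  rw [h2, Finset.sum_add_distrib]
  simp

lemma topS_combine {E : Type*} (X : Finset E) (f g h : E → ℝ) (hg : ∀ x, 0 ≤ g x)
    (hh : ∀ x, 0 ≤ h x) (α β : ℝ) (hβ : 0 ≤ β)
    (hle : ∀ x ∈ X, f x ≤ g x + α + β * h x) (p : ℕ) (hp : p ≤ X.card) :
    topS X f p ≤ topS X g p + p * α + β * topS X h p := by
  obtain ⟨t, ht⟩ := topS_eq X g hg p hp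
  obtain ⟨u, hu⟩ := topS_eq X h hh p hp
  have h1 := topS_le X f p hp (t + α + β * u)
  have h2 : ∑ x ∈ X, max (f x - (t + α + β * u)) 0 ≤
      ∑ x ∈ X, (max (g x - t) 0 + β * max (h x - u) 0) := by
    refine Finset.sum_le_sum fun x hx => max_le ?_ ?_
    · have a1 := le_max_left (g x - t) 0
      have a2 := mul_le_mul_of_nonneg_left (le_max_left (h x - u) 0) hβ
      linarith [hle x hx]
    · positivity
  rw [Finset.sum_add_distrib, ← Finset.mul_sum] at h2
  rw [ht, hu]
  nlinarith

lemma topS_mono_f {E : Type*} (X : Finset E) (f g : E → ℝ) (hg : ∀ x, 0 ≤ g x)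
    (hle : ∀ x ∈ X, f x ≤ g x) (p : ℕ) (hp : p ≤ X.card) :
    topS X f p ≤ topS X g p := by
  have := topS_combine X f g g hg hg 0 0 le_rfl (by simpa using hle) p hp
  simpa using this

lemma topS_mono_p {E : Type*} (X : Finset E) (f : E → ℝ) (hf : ∀ x, 0 ≤ f x) {p q : ℕ}
    (h : q ≤ p) : topS X f q ≤ topS X f p :=
  Finset.sum_le_sum_of_subset_of_nonneg (Finset.range_mono h)
      (fun i _ _ => sv_nonneg X f hf i)

lemma topS_ratio {E : Type*} (X : Finset E) (f : E → ℝ) (hf : ∀ x, 0 ≤ f x) {p q : ℕ}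
    (h : q ≤ p) : (q : ℝ) * topS X f p ≤ p * topS X f q := by
  have key : (q : ℝ) * sv X f q ≤ topS X f q := by
    have : ∑ i ∈ Finset.range q, sv X f q ≤ topS X f q :=
      Finset.sum_le_sum fun i hi => sv_anti X f hf (Finset.mem_range.mp hi).le
    simpa using this
  induction p, h using Nat.le_induction with
  | base => exact le_rfl
  | succ p hp ih =>
    have e : topS X f (p + 1) = topS X f p + sv X f p := by
      simp [topS, Finset.sum_range_succ]
    rw [e]
    have := mul_le_mul_of_nonneg_left (sv_anti X f hf hp) (Nat.cast_nonneg (α := ℝ) q)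
    push_cast
    nlinarith

lemma le_topS_one {E : Type*} (X : Finset E) (f : E → ℝ) (hf : ∀ x, 0 ≤ f x)
    (x : E) (hx : x ∈ X) : f x ≤ topS X f 1 := by
  obtain ⟨t, ht⟩ := topS_eq X f hf 1 (Finset.card_pos.mpr ⟨x, hx⟩)
  rw [ht]
  have := Finset.single_le_sum (f := fun x => max (f x - t) 0)
    (fun i _ => le_max_right _ _) hx
  push_cast
  linarith [le_max_left (f x - t) 0]

lemma abel_nonneg (v c : ℕ → ℝ) (n : ℕ) (hv : Antitone v)
    (hc : ∀ p ≤ n, 0 ≤ ∑ i ∈ Finset.range p, c i) :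
    ∀ p ≤ n, ∀ x, 0 ≤ x → (∀ i < p, x ≤ v i) →
      x * ∑ i ∈ Finset.range p, c i ≤ ∑ i ∈ Finset.range p, v i * c i := by
  intro p
  induction p with
  | zero => intros; simp
  | succ p ih =>
    intro hp x hx hxv
    have h0 := hxv p (Nat.lt_succ_self p)
    have h1 := ih (by omega) (v p) (hx.trans h0) (fun i hi => hv hi.le)
    have h2 := mul_le_mul_of_nonneg_right h0 (hc (p + 1) hp)
    rw [Finset.sum_range_succ (fun i => v i * c i)]
    refine h2.trans ?_
    rw [Finset.sum_range_succ, mul_add]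
    linarith

lemma weighted_le (n : ℕ) (v : Fin n → ℝ) (hv0 : ∀ i, 0 ≤ v i) (hv : Antitone v)
    (a b : ℕ → ℝ)
    (hab : ∀ p ≤ n, ∑ i ∈ Finset.range p, a i ≤ ∑ i ∈ Finset.range p, b i) :
    ∑ i : Fin n, v i * a i ≤ ∑ i : Fin n, v i * b i := by
  set w : ℕ → ℝ := fun i => if h : i < n then v ⟨i, h⟩ else 0 with hw
  have hw0 : ∀ i, 0 ≤ w i := by
    intro i
    simp only [hw]
    split_ifs
    · exact hv0 _
    · exact le_rfl
  have hwa : Antitone w := by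
    intro i j hij
    by_cases h : j < n
    · simp only [hw, h, lt_of_le_of_lt hij h, dif_pos]
      exact hv hij
    · have : w j = 0 := by simp [hw, h]
      rw [this]; exact hw0 i
  have h := abel_nonneg w (fun i => b i - a i) n hwa (by
    intro p hp
    rw [Finset.sum_sub_distrib]
    linarith [hab p hp]) n le_rfl 0 le_rfl (fun i _ => hw0 i)
  rw [zero_mul, Finset.sum_range] at h
  have e : ∀ i : Fin n, w i * (b i - a i) = v i * b i - v i * a i := by
    intro i
    simp only [hw, i.2, dif_pos]
    ring
  simp only [e, Finset.sum_sub_distrib] at h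
  linarith

lemma costV_map_eq (d n : ℕ) (v : Fin n → ℝ) (X : Finset (EuclideanSpace ℝ (Fin d)))
    (m : EuclideanSpace ℝ (Fin d) → EuclideanSpace ℝ (Fin d))
    (C : Finset (EuclideanSpace ℝ (Fin d))) :
    costV d n v (X.val.map m) C =
      ∑ i : Fin n, v i * sv X (fun x => Metric.infDist (m x) (C : Set _)) i := by
  unfold costV sortedDistsDesc sv svals
  rw [Multiset.map_map]
  rfl

lemma ball_cover (d : ℕ) (c : EuclideanSpace ℝ (Fin d)) (r : ℝ) (hr : 0 ≤ r) (δ : ℝ)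
    (hδ : 0 < δ) (hδ1 : δ ≤ 1) :
    ∃ N : Finset (EuclideanSpace ℝ (Fin d)), (N.card : ℝ) ≤ ((2 * d + 5) / δ) ^ d ∧
      ∀ x, dist x c ≤ r → ∃ y ∈ N, dist x y ≤ δ * r := by
  set M : ℕ := ⌈(d : ℝ) / δ⌉₊ + 1 with hM
  have hMpos : (0 : ℝ) < M := by positivity
  have hMd : (d : ℝ) / δ ≤ M := by
    have := Nat.le_ceil ((d : ℝ) / δ)
    push_cast [hM]; linarith
  have hMu : (M : ℝ) ≤ d / δ + 2 := by
    have := Nat.ceil_lt_add_one (a := (d : ℝ) / δ) (by positivity)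
    push_cast [hM]; linarith
  refine ⟨(Fintype.piFinset (fun _ : Fin d => Finset.Icc (-(M : ℤ)) M)).image
    (fun z => c + WithLp.toLp 2 (fun i => r / M * (z i : ℝ))), ?_, ?_⟩
  · have h1 := Finset.card_image_le
      (s := Fintype.piFinset (fun _ : Fin d => Finset.Icc (-(M : ℤ)) M))
      (f := fun z => c + WithLp.toLp 2 (fun i => r / M * (z i : ℝ)))
    have h2 : (Fintype.piFinset (fun _ : Fin d => Finset.Icc (-(M : ℤ)) M)).card
        = (2 * M + 1) ^ d := by
      rw [Fintype.card_piFinset]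
      simp only [Int.card_Icc, Finset.prod_const, Finset.card_univ, Fintype.card_fin]
      congr 1
      omega
    rw [h2] at h1
    have h3 : ((2 * M + 1 : ℕ) : ℝ) ≤ (2 * d + 5) / δ := by
      have : (1 : ℝ) ≤ 1 / δ := by rw [le_div_iff₀ hδ]; linarith
      have e : (2 * (d : ℝ) + 5) / δ = 2 * (d / δ) + 5 * (1 / δ) := by ring
      rw [e]
      push_cast
      linarith
    calc _ ≤ (((2 * M + 1) ^ d : ℕ) : ℝ) := by exact_mod_cast h1
      _ = ((2 * M + 1 : ℕ) : ℝ) ^ d := by push_cast; rfl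
      _ ≤ _ := by gcongr
  · intro x hx
    have hxi : ∀ i, |x i - c i| ≤ r := by
      intro i
      have := EuclideanSpace.norm_eq (x - c)
      have h2 := PiLp.norm_apply_le (x - c) i
      rw [dist_eq_norm] at hx
      simpa using h2.trans hx
    rcases hr.eq_or_lt with h0 | hr0
    · refine ⟨c, ?_, ?_⟩
      · rw [Finset.mem_image]
        refine ⟨0, by simp [Fintype.mem_piFinset], ?_⟩
        ext i; simp
      · rw [← h0] at hx ⊢; simpa using hx
    set z : Fin d → ℤ := fun i => ⌊(x i - c i) * M / r⌋ with hz
    refine ⟨c + WithLp.toLp 2 (fun i => r / M * (z i : ℝ)), ?_, ?_⟩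
    · refine Finset.mem_image_of_mem _ ?_
      rw [Fintype.mem_piFinset]
      intro i
      have hb := abs_le.mp (hxi i)
      rw [Finset.mem_Icc]
      constructor
      · rw [Int.le_floor, le_div_iff₀ hr0]
        push_cast
        nlinarith
      · have : (z i : ℝ) ≤ (M : ℝ) := by
          refine (Int.floor_le _).trans ?_
          rw [div_le_iff₀ hr0]
          nlinarith
        exact_mod_cast this
    · rw [EuclideanSpace.dist_eq]
      have hco : ∀ i, dist (x i) ((c + WithLp.toLp 2 (fun i => r / M * (z i : ℝ)) :
          EuclideanSpace ℝ (Fin d)) i) ≤ r / M := by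
        intro i
        have f1 := Int.floor_le ((x i - c i) * M / r)
        have f2 := (Int.lt_floor_add_one ((x i - c i) * M / r)).le
        have e : x i - c i = r / M * ((x i - c i) * M / r) := by field_simp
        have hq : 0 < r / M := by positivity
        have g1 := mul_le_mul_of_nonneg_left f1 hq.le
        have g2 := mul_le_mul_of_nonneg_left f2 hq.le
        rw [← e] at g1 g2
        rw [Real.dist_eq, abs_le]
        simp only [PiLp.add_apply, hz]
        constructor <;> nlinarith
      have hsum : ∑ i, dist (x i) ((c + WithLp.toLp 2 (fun i => r / M * (z i : ℝ)) :
          EuclideanSpace ℝ (Fin d)) i) ^ 2 ≤ d * (r / M) ^ 2 := by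
        calc _ ≤ ∑ i : Fin d, (r / M) ^ 2 :=
              Finset.sum_le_sum fun i _ => pow_le_pow_left₀ dist_nonneg (hco i) 2
          _ = _ := by simp
      have hdr : d * (r / M) ≤ δ * r := by
        rw [div_le_iff₀ hδ] at hMd
        rw [mul_div_assoc', div_le_iff₀ hMpos]
        nlinarith
      refine (Real.sqrt_le_sqrt hsum).trans (le_trans ?_ hdr)
      rw [Real.sqrt_le_left (by positivity), mul_pow]
      have : (d : ℝ) ≤ (d : ℝ) ^ 2 := by
        exact_mod_cast Nat.le_self_pow (by norm_num) d
      gcongr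

/-- Any center set can be replaced by one inside `X` at the cost of a factor two. -/
lemma snap {d : ℕ} (X C : Finset (EuclideanSpace ℝ (Fin d))) (hX : X.Nonempty)
    (hC : C.Nonempty) :
    ∃ C' ⊆ X, C'.Nonempty ∧ C'.card ≤ C.card ∧
      ∀ x ∈ X, Metric.infDist x (C' : Set (EuclideanSpace ℝ (Fin d))) ≤
        2 * Metric.infDist x (C : Set (EuclideanSpace ℝ (Fin d))) := by
  have : ∀ c, ∃ y ∈ X, ∀ x ∈ X, dist y c ≤ dist x c := fun c =>
    Finset.exists_min_image X (fun y => dist y c) hX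
  choose π hπ hmin using this
  refine ⟨C.image π, ?_, hC.image _, Finset.card_image_le, ?_⟩
  · intro y hy
    obtain ⟨c, -, rfl⟩ := Finset.mem_image.mp hy
    exact hπ c
  · intro x hx
    obtain ⟨c, hc, hcx⟩ := C.finite_toSet.isCompact.exists_infDist_eq_dist
      (by exact_mod_cast hC) x
    rw [hcx]
    have h1 : Metric.infDist x ((C.image π : Finset _) : Set (EuclideanSpace ℝ (Fin d)))
        ≤ dist x (π c) :=
      Metric.infDist_le_dist_of_mem (by
        exact_mod_cast Finset.mem_image_of_mem π (by exact_mod_cast hc))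
    have h2 := hmin c x hx
    have h3 := dist_triangle x c (π c)
    rw [dist_comm c] at h3
    linarith

/-- The displacement map. -/
lemma rings {d : ℕ} (X S : Finset (EuclideanSpace ℝ (Fin d))) (hS : S.Nonempty) (a : ℝ)
    (ha : 0 ≤ a) (L : ℕ)
    (hL : ∀ x ∈ X, Metric.infDist x (S : Set (EuclideanSpace ℝ (Fin d))) ≤ 2 ^ L * a)
    (δ : ℝ) (hδ : 0 < δ) (hδ1 : δ ≤ 1) :
    ∃ (m : EuclideanSpace ℝ (Fin d) → EuclideanSpace ℝ (Fin d))
      (N : Finset (EuclideanSpace ℝ (Fin d))),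
      (N.card : ℝ) ≤ S.card * (L + 1) * ((2 * d + 5) / δ) ^ d ∧
      ∀ x ∈ X, m x ∈ N ∧
        dist x (m x) ≤ δ * a +
          2 * δ * Metric.infDist x (S : Set (EuclideanSpace ℝ (Fin d))) := by
  have hcov := fun (c : EuclideanSpace ℝ (Fin d)) (j : ℕ) =>
    ball_cover d c (2 ^ j * a) (by positivity) δ hδ hδ1
  choose N hN hNc using hcov
  set T := (S ×ˢ Finset.range (L + 1)).biUnion (fun q => N q.1 q.2) with hT
  have hcard : (T.card : ℝ) ≤ S.card * (L + 1) * ((2 * d + 5) / δ) ^ d := by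
    have h1 : T.card ≤ ∑ q ∈ S ×ˢ Finset.range (L + 1), (N q.1 q.2).card :=
      Finset.card_biUnion_le
    calc (T.card : ℝ) ≤ ((∑ q ∈ S ×ˢ Finset.range (L + 1), (N q.1 q.2).card : ℕ) : ℝ) := by
          exact_mod_cast h1
      _ = ∑ q ∈ S ×ˢ Finset.range (L + 1), ((N q.1 q.2).card : ℝ) := by push_cast; rfl
      _ ≤ ∑ q ∈ S ×ˢ Finset.range (L + 1), ((2 * d + 5) / δ) ^ d :=
          Finset.sum_le_sum fun q _ => hN q.1 q.2
      _ = _ := by simp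
  have hex : ∀ x, ∃ y, x ∈ X → y ∈ T ∧ dist x y ≤ δ * a +
      2 * δ * Metric.infDist x (S : Set (EuclideanSpace ℝ (Fin d))) := by
    intro x
    by_cases hx : x ∈ X
    swap
    · exact ⟨x, fun h => absurd h hx⟩
    obtain ⟨c, hc, hcx⟩ := S.finite_toSet.isCompact.exists_infDist_eq_dist
      (by exact_mod_cast hS) x
    have hc' : c ∈ S := by exact_mod_cast hc
    have hxL := hL x hx
    rw [hcx] at hxL
    have hE : ∃ j, dist x c ≤ 2 ^ j * a := ⟨L, hxL⟩
    have hj := Nat.find_spec hE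
    have hjL : Nat.find hE ≤ L := Nat.find_min' hE hxL
    have hjm := fun i => Nat.find_min hE (m := i)
    generalize Nat.find hE = j at hj hjL hjm
    obtain ⟨y, hy, hyd⟩ := hNc c j x hj
    refine ⟨y, fun _ => ⟨?_, ?_⟩⟩
    · rw [hT, Finset.mem_biUnion]
      refine ⟨(c, j), ?_, hy⟩
      simp only [Finset.mem_product, Finset.mem_range]
      exact ⟨hc', by omega⟩
    · rw [hcx]
      have hdn : 0 ≤ dist x c := dist_nonneg
      rcases j with _ | j
      · have : 0 ≤ 2 * δ * dist x c := by positivity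
        simp at hyd
        linarith
      · have h2 := not_le.mp (hjm j (Nat.lt_succ_self j))
        have h3 := mul_le_mul_of_nonneg_left h2.le hδ.le
        have h4 : 0 ≤ δ * a := by positivity
        rw [pow_succ] at hyd
        nlinarith
  choose m hm using hex
  exact ⟨m, T, hcard, hm⟩

theorem stmt_13 (d : ℕ) (hd : 1 ≤ d) :
    ∃ K : ℝ, 0 < K ∧
      ∀ k : ℕ, 1 ≤ k →
      ∀ ε : ℝ, ε ∈ Set.Ioo (0 : ℝ) 1 →
      ∀ (X : Finset (EuclideanSpace ℝ (Fin d))) (n : ℕ), X.card = n → 2 ≤ n →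
      ∃ D : Multiset (EuclideanSpace ℝ (Fin d)),
        Multiset.card D = n ∧
        (D.toFinset.card : ℝ) ≤ K * k ^ 2 * (Real.log n) ^ 2 / ε ^ (d + 1) ∧
        ∀ C : Finset (EuclideanSpace ℝ (Fin d)), C.card = k → C.Nonempty →
          ∀ v : Fin n → ℝ, (∀ i, 0 ≤ v i) → Antitone v →
            costV d n v D C ∈
              Set.Icc ((1 - ε) * costV d n v X.val C) ((1 + ε) * costV d n v X.val C) := by
  refine ⟨24 * (10 * (2 * d + 5)) ^ d, by positivity, ?_⟩
  intro k hk ε ⟨hε0, hε1⟩ X n hXn hn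
  have hXne : X.Nonempty := Finset.card_pos.mp (by omega)
  set F : Finset (EuclideanSpace ℝ (Fin d)) → EuclideanSpace ℝ (Fin d) → ℝ :=
    fun C x => Metric.infDist x (C : Set (EuclideanSpace ℝ (Fin d))) with hF
  have hF0 : ∀ C x, 0 ≤ F C x := fun C x => Metric.infDist_nonneg
  -- near-optimal centers for each `p`
  have hopt : ∀ p : ℕ, ∃ A : Finset (EuclideanSpace ℝ (Fin d)), A.Nonempty ∧ A.card ≤ k ∧
      (∀ B ⊆ X, B.Nonempty → B.card ≤ k → topS X (F A) p ≤ topS X (F B) p) := by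
    intro p
    obtain ⟨x0, hx0⟩ := hXne
    obtain ⟨A, hA, hAm⟩ := Finset.exists_min_image
      (X.powerset.filter fun B => B.Nonempty ∧ B.card ≤ k) (fun B => topS X (F B) p)
      ⟨{x0}, by simp [hx0, hk]⟩
    simp only [Finset.mem_filter, Finset.mem_powerset] at hA hAm
    exact ⟨A, hA.2.1, hA.2.2, fun B h1 h2 h3 => hAm B ⟨h1, h2, h3⟩⟩
  choose A hAne hAk hAm using hopt
  have hA2 : ∀ p ≤ n, ∀ C : Finset (EuclideanSpace ℝ (Fin d)), C.card ≤ k → C.Nonempty →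
      topS X (F (A p)) p ≤ 2 * topS X (F C) p := by
    intro p hp C hC hCne
    obtain ⟨C', h1, h2, h3, h4⟩ := snap X C hXne hCne
    have := hAm p C' h1 h2 (h3.trans hC)
    have h5 := topS_combine X (F C') (F C) (F C) (hF0 C) (hF0 C) 0 1 zero_le_one (by
      intro x hx
      have := h4 x hx
      simp only [hF]
      linarith) p (by omega)
    linarith
  set S := (Finset.range (Nat.log 2 n + 1)).biUnion (fun j => A (2 ^ j)) with hS
  have hSsub : ∀ j < Nat.log 2 n + 1, ∀ x, F S x ≤ F (A (2 ^ j)) x := by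
    intro j hj x
    refine Metric.infDist_le_infDist_of_subset ?_ (by exact_mod_cast hAne _)
    intro y hy
    have hy' : y ∈ A (2 ^ j) := by exact_mod_cast hy
    have : y ∈ S := Finset.mem_biUnion.mpr ⟨j, Finset.mem_range.mpr hj, hy'⟩
    exact_mod_cast this
  have hSne : S.Nonempty := by
    obtain ⟨y, hy⟩ := hAne (2 ^ 0)
    exact ⟨y, Finset.mem_biUnion.mpr ⟨0, by simp, hy⟩⟩
  have hScard : S.card ≤ (Nat.log 2 n + 1) * k := by
    have := Finset.card_biUnion_le_card_mul (Finset.range (Nat.log 2 n + 1))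
      (fun j => A (2 ^ j)) k (fun j _ => hAk _)
    simpa using this
  have hn0 : (0 : ℝ) < n := by positivity
  set a : ℝ := topS X (F (A n)) n / n with ha
  have hna : n * a = topS X (F (A n)) n := by rw [ha]; field_simp
  have ha0 : 0 ≤ a := by
    have : 0 ≤ topS X (F (A n)) n := Finset.sum_nonneg fun i _ => sv_nonneg X _ (hF0 _) i
    positivity
  set L := Nat.log 2 n + 2 with hL
  have hdist : ∀ x ∈ X, F S x ≤ 2 ^ L * a := by
    intro x hx
    have h1 := hSsub 0 (by omega) x
    have h2 := le_topS_one X (F (A (2 ^ 0))) (hF0 _) x hx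
    have h4 : topS X (F (A (2 ^ 0))) 1 ≤ 2 * topS X (F (A n)) 1 := by
      simpa using hA2 1 (by omega) (A n) (hAk n) (hAne n)
    have h5 : topS X (F (A n)) 1 ≤ topS X (F (A n)) n :=
      topS_mono_p X _ (hF0 _) (by omega)
    have h6 : (2 * n : ℝ) ≤ 2 ^ L := by
      have := Nat.lt_pow_succ_log_self (b := 2) (by norm_num) n
      have h7 : 2 * n ≤ 2 ^ L := by
        rw [hL, pow_succ]
        have : n < 2 ^ (Nat.log 2 n + 1) := this
        omega
      exact_mod_cast h7
    have h8 := mul_le_mul_of_nonneg_right h6 ha0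
    simp only [pow_zero] at h1 h2 h4
    linarith
  obtain ⟨m, N, hNcard, hm⟩ := rings X S hSne a ha0 L hdist (ε / 10) (by positivity)
    (by linarith)
  refine ⟨X.val.map m, by simp [hXn], ?_, ?_⟩
  · have hsub : (X.val.map m).toFinset ⊆ N := by
      intro y hy
      rw [Multiset.mem_toFinset, Multiset.mem_map] at hy
      obtain ⟨x, hx, rfl⟩ := hy
      exact (hm x hx).1
    have h1 : (((X.val.map m).toFinset).card : ℝ) ≤ N.card := by
      exact_mod_cast Finset.card_le_card hsub
    refine h1.trans (hNcard.trans ?_)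
    have hlog2 := Real.log_two_gt_d9
    have hlogn : Real.log 2 ≤ Real.log n :=
      Real.log_le_log (by norm_num) (by exact_mod_cast hn)
    have hlg : (Nat.log 2 n : ℝ) * Real.log 2 ≤ Real.log n := by
      rw [← Real.log_pow]
      refine Real.log_le_log (by positivity) ?_
      exact_mod_cast Nat.pow_log_le_self 2 (by omega)
    have hLu : (Nat.log 2 n : ℝ) + 1 ≤ 3 * Real.log n := by
      have : (0 : ℝ) ≤ Nat.log 2 n := by positivity
      nlinarith
    have hLv : (L : ℝ) + 1 ≤ 8 * Real.log n := by
      rw [hL]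
      push_cast
      linarith
    have hSc : (S.card : ℝ) ≤ (3 * Real.log n) * k := by
      calc (S.card : ℝ) ≤ ((Nat.log 2 n : ℝ) + 1) * k := by exact_mod_cast hScard
        _ ≤ _ := by gcongr
    have hlp : 0 ≤ Real.log n := by linarith
    have hk2 : (k : ℝ) ≤ (k : ℝ) ^ 2 := by
      exact_mod_cast Nat.le_self_pow (by norm_num) k
    have hpow : ((2 * (d : ℝ) + 5) / (ε / 10)) ^ d ≤ (10 * (2 * d + 5)) ^ d / ε ^ (d + 1) := by
      have e : (2 * (d : ℝ) + 5) / (ε / 10) = (10 * (2 * d + 5)) / ε := by field_simp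
      rw [e, div_pow]
      refine div_le_div_of_nonneg_left (by positivity) (by positivity) ?_
      exact pow_le_pow_of_le_one hε0.le hε1.le (Nat.le_succ d)
    calc (S.card : ℝ) * (L + 1) * ((2 * d + 5) / (ε / 10)) ^ d
        ≤ ((3 * Real.log n) * (k : ℝ) ^ 2) * (8 * Real.log n) *
          ((10 * (2 * d + 5)) ^ d / ε ^ (d + 1)) := by
          gcongr
          exact hSc.trans (by gcongr)
      _ = _ := by ring
  · intro C hC hCne v hv0 hv
    have hdisp : ∀ p ≤ n, (ε / 10) * (p * a) + 2 * (ε / 10) * topS X (F S) p ≤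
        ε * topS X (F C) p := by
      intro p hp
      rcases Nat.eq_zero_or_pos p with rfl | hp0
      · simp [topS]
      have i1 : p * a ≤ 2 * topS X (F C) p := by
        have j1 := hA2 n le_rfl C hC.le hCne
        have j2 := topS_ratio X (F C) (hF0 C) hp
        rw [← hna] at j1
        have j3 : (n : ℝ) * (p * a) ≤ n * (2 * topS X (F C) p) := by
          have := mul_le_mul_of_nonneg_left j1 (Nat.cast_nonneg (α := ℝ) p)
          linarith
        exact le_of_mul_le_mul_left j3 hn0
      have i2 : topS X (F S) p ≤ 4 * topS X (F C) p := by
        set j := Nat.log 2 p with hj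
        have hq : 2 ^ j ≤ p := Nat.pow_log_le_self 2 (by omega)
        have hq2 : p < 2 ^ (j + 1) := Nat.lt_pow_succ_log_self (by norm_num) p
        have hjn : j < Nat.log 2 n + 1 := by
          have := Nat.log_mono_right (b := 2) hp
          omega
        have j1 := topS_mono_f X (F S) (F (A (2 ^ j))) (hF0 _) (fun x _ => hSsub j hjn x) p
          (by omega)
        have j2 := topS_ratio X (F (A (2 ^ j))) (hF0 _) hq
        have j3 := hA2 (2 ^ j) (by omega) C hC.le hCne
        have j4 := topS_mono_p X (F C) (hF0 _) hq
        have j5 : 0 ≤ topS X (F (A (2 ^ j))) (2 ^ j) :=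
          Finset.sum_nonneg fun i _ => sv_nonneg X _ (hF0 _) i
        have j6 : topS X (F (A (2 ^ j))) p ≤ 2 * topS X (F (A (2 ^ j))) (2 ^ j) := by
          have hp2 : (p : ℝ) ≤ ((2 ^ j : ℕ) : ℝ) * 2 := by
            rw [pow_succ] at hq2
            exact_mod_cast hq2.le
          have hqp : (0 : ℝ) < ((2 ^ j : ℕ) : ℝ) := by positivity
          refine le_of_mul_le_mul_left ?_ hqp
          nlinarith
        linarith
      have := mul_le_mul_of_nonneg_left i1 (by positivity : (0 : ℝ) ≤ ε / 10)
      have := mul_le_mul_of_nonneg_left i2 (by positivity : (0 : ℝ) ≤ 2 * (ε / 10))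
      linarith
    have hX0 : costV d n v X.val C = ∑ i : Fin n, v i * sv X (F C) i := by
      have := costV_map_eq d n v X id C
      rw [Multiset.map_id] at this
      exact this
    rw [costV_map_eq d n v X m C, hX0]
    set G : EuclideanSpace ℝ (Fin d) → ℝ := fun x => F C (m x) with hG
    have hup : ∀ p ≤ n, topS X G p ≤ (1 + ε) * topS X (F C) p := by
      intro p hp
      have := topS_combine X G (F C) (F S) (hF0 _) (hF0 _) (ε / 10 * a) (2 * (ε / 10))
        (by positivity) (by
          intro x hx
          have h1 := (hm x hx).2
          have h2 : F C (m x) ≤ F C x + dist (m x) x := Metric.infDist_le_infDist_add_dist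
          rw [dist_comm] at h2
          simp only [hG, hF] at h2 ⊢
          linarith) p (by omega)
      linarith [hdisp p hp]
    have hlo : ∀ p ≤ n, (1 - ε) * topS X (F C) p ≤ topS X G p := by
      intro p hp
      have := topS_combine X (F C) G (F S) (fun x => hF0 C (m x)) (hF0 _) (ε / 10 * a)
        (2 * (ε / 10)) (by positivity) (by
          intro x hx
          have h1 := (hm x hx).2
          have h2 : F C x ≤ F C (m x) + dist x (m x) := Metric.infDist_le_infDist_add_dist
          simp only [hG, hF] at h2 ⊢
          linarith) p (by omega)
      linarith [hdisp p hp]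
    constructor
    · have := weighted_le n v hv0 hv (fun i => (1 - ε) * sv X (F C) i) (fun i => sv X G i) (by
        intro p hp
        rw [← Finset.mul_sum]
        exact hlo p hp)
      rw [Finset.mul_sum]
      refine le_trans (le_of_eq ?_) this
      exact Finset.sum_congr rfl fun i _ => by ring
    · have := weighted_le n v hv0 hv (fun i => sv X G i) (fun i => (1 + ε) * sv X (F C) i) (by
        intro p hp
        rw [← Finset.mul_sum]
        exact hup p hp)
      rw [Finset.mul_sum]
      refine le_trans this (le_of_eq ?_)
      exact Finset.sum_congr rfl fun i _ => by ring
end
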